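/- Let p ∈ (1,2). For a compact set E ⊆ ℝ² define the variational p-capacity Cap_p(E) = inf { ∫_{ℝ²} ‖∇u(x)‖^p dx : u ∈ C_c^∞(ℝ²), u = 1 on E }. Then, for any regular hexagon H* with |H*| = 1, Cap_p(H*) ≤ Cap_p(H) for every H ∈ 𝓗 with |H| = 1; that is, among convex polygons of unit area that tile the plane by translations, the regular hexagon minimizes the variational p-capacity. -/

import Mathlib

open MeasureTheory Metric Filter Real Set
open scoped Topology ENNReal NNReal RealInnerProductSpace

noncomputable section

/-- The Euclidean plane. -/
abbrev E2 : Type := EuclideanSpace ℝ (Fin 2)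

/-- The line through `x` with direction `v`. -/
def lineThrough (x v : E2) : Set E2 := {y : E2 | ∃ t : ℝ, y = x + t • v}

/-- Steiner symmetrization of `A` with respect to the affine line `{x | ⟪x, v⟫ = c}`,
where `v` is a unit normal vector of the line. -/
def steiner (v : E2) (c : ℝ) (A : Set E2) : Set E2 :=
  {y : E2 | ∃ x : E2, ⟪x, v⟫ = c ∧ (A ∩ lineThrough x v).Nonempty ∧
    ∃ r : ℝ, y = x + r • v ∧
      ENNReal.ofReal (2 * |r|) ≤ μH[1] (A ∩ lineThrough x v)}

/-- The class `𝓗` of centrally symmetric convex hexagons (possibly degenerated to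
parallelograms), i.e. the convex polygons tiling the plane by translations. -/
def Hex (H : Set E2) : Prop :=
  (∃ x₀ p q r : E2, H = (fun y => x₀ + y) '' convexHull ℝ ({p, q, r, -p, -q, -r} : Set E2)) ∧
  (interior H).Nonempty

/-- The `k`-th vertex of the standard regular hexagon. -/
def hexVertex (k : ℕ) : E2 :=
  (WithLp.equiv 2 (Fin 2 → ℝ)).symm ![Real.cos (k * π / 3), Real.sin (k * π / 3)]

/-- The standard regular hexagon, with vertices `(cos (kπ/3), sin (kπ/3))`, `k = 0, …, 5`. -/
def stdHexagon : Set E2 := convexHull ℝ (Set.range fun k : Fin 6 => hexVertex k)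

/-- A similarity of the plane (composition of a rotation, a dilation and a translation,
possibly with a reflection). -/
def IsSimilarity (f : E2 → E2) : Prop :=
  ∃ s : ℝ, 0 < s ∧ ∀ x y, dist (f x) (f y) = s * dist x y

/-- A regular hexagon is any image of the standard one under a similarity. -/
def IsRegularHexagon (H : Set E2) : Prop := ∃ f : E2 → E2, IsSimilarity f ∧ H = f '' stdHexagon

/-- Convergence of a sequence of sets in the Hausdorff distance. -/
def HausdorffTendsto (Hn : ℕ → Set E2) (H : Set E2) : Prop :=
  Tendsto (fun n => EMetric.hausdorffEdist (Hn n) H) atTop (𝓝 0)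

/-- The planar cross product (determinant) of two vectors. -/
def det2 (u w : E2) : ℝ := u 0 * w 1 - u 1 * w 0

/-- `A, B, C, D, E, F` are (consecutive) vertices of the centrally symmetric hexagon `H`:
`H` is their convex hull, `D, E, F` are the antipodes of `A, B, C` with respect to a center
`o`, and `H` has nonempty interior. -/
def HexWithVertices (A B C D E F : E2) (H : Set E2) : Prop :=
  H = convexHull ℝ ({A, B, C, D, E, F} : Set E2) ∧
  (∃ o : E2, D = (2:ℝ) • o - A ∧ E = (2:ℝ) • o - B ∧ F = (2:ℝ) • o - C) ∧
  (interior H).Nonempty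

/-- The vertices `A, B, C, D, E, F` are listed in counterclockwise order. -/
def CCWList (A B C D E F : E2) : Prop :=
  0 ≤ det2 (B - A) (C - B) ∧ 0 ≤ det2 (C - B) (D - C) ∧ 0 ≤ det2 (D - C) (E - D) ∧
  0 ≤ det2 (E - D) (F - E) ∧ 0 ≤ det2 (F - E) (A - F) ∧ 0 ≤ det2 (A - F) (B - A)

/-- The six vertices are distinct and no three of them are collinear. -/
def NondegenerateHex (A B C D E F : E2) : Prop :=
  [A, B, C, D, E, F].Pairwise (· ≠ ·) ∧
  ∀ P Q R : E2, P ∈ ({A, B, C, D, E, F} : Set E2) → Q ∈ ({A, B, C, D, E, F} : Set E2) →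
    R ∈ ({A, B, C, D, E, F} : Set E2) → P ≠ Q → P ≠ R → Q ≠ R →
      ¬ Collinear ℝ ({P, Q, R} : Set E2)

/-- The variational `p`-capacity of `E ⊆ ℝ²`. -/
def pCapacity (p : ℝ) (E : Set E2) : ℝ :=
  sInf {t : ℝ | ∃ u : E2 → ℝ, ContDiff ℝ (⊤ : ℕ∞) u ∧ HasCompactSupport u ∧
    (∀ x ∈ E, u x = 1) ∧ t = ∫ x : E2, ‖fderiv ℝ u x‖ ^ p}

/-- The `p`-Dirichlet energy of a function on the plane. -/
def dirichletEnergy (p : ℝ) (u : E2 → ℝ) : ℝ := ∫ x : E2, ‖fderiv ℝ u x‖ ^ p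

lemma measurable_norm_fderiv_rpow (p : ℝ) (u : E2 → ℝ) :
    Measurable fun x => ‖fderiv ℝ u x‖ ^ p :=
  ((measurable_fderiv ℝ u).norm).pow_const p

lemma dirichletEnergy_nonneg (p : ℝ) (u : E2 → ℝ) : 0 ≤ dirichletEnergy p u :=
  integral_nonneg fun _ => by positivity

lemma integrable_norm_fderiv_rpow {p : ℝ} (hp : 0 < p) {u : E2 → ℝ} {L : ℝ≥0}
    (hu : LipschitzWith L u) (hc : HasCompactSupport u) :
    Integrable fun x => ‖fderiv ℝ u x‖ ^ p := by
  have hcd : HasCompactSupport (fderiv ℝ u) := hc.fderiv ℝ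
  have hsub : Function.support (fun x => ‖fderiv ℝ u x‖ ^ p) ⊆ tsupport (fderiv ℝ u) := by
    intro x hx
    apply subset_tsupport
    intro h0
    apply hx
    simp [h0, Real.zero_rpow hp.ne']
  rw [← integrableOn_iff_integrable_of_support_subset hsub]
  refine Measure.integrableOn_of_bounded (M := (L : ℝ) ^ p) (hcd.isCompact.measure_lt_top.ne)
    (measurable_norm_fderiv_rpow p u).aestronglyMeasurable ?_
  refine ae_of_all _ fun x => ?_
  rw [Real.norm_of_nonneg (by positivity)]
  exact Real.rpow_le_rpow (norm_nonneg _) (norm_fderiv_le_of_lipschitz ℝ hu) hp.le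

lemma pCapacity_le {p : ℝ} {K : Set E2} {u : E2 → ℝ} (hu : ContDiff ℝ (⊤ : ℕ∞) u)
    (hc : HasCompactSupport u) (h1 : ∀ x ∈ K, u x = 1) :
    pCapacity p K ≤ dirichletEnergy p u := by
  refine csInf_le ⟨0, ?_⟩ ⟨u, hu, hc, h1, rfl⟩
  rintro t ⟨v, -, -, -, rfl⟩
  exact dirichletEnergy_nonneg p v

/-- Averaging the translates of a Lipschitz function against an absolutely continuous
probability measure does not increase the energy. -/
lemma dirichletEnergy_average_le {p : ℝ} (hp : 1 ≤ p) {w : E2 → ℝ} {L : ℝ≥0}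
    (hw : LipschitzWith L w) (hc : HasCompactSupport w) (μ : Measure E2)
    [IsProbabilityMeasure μ] (hμ : μ ≪ volume) :
    dirichletEnergy p (fun x => ∫ t, w (x - t) ∂μ) ≤ dirichletEnergy p w := by
  have hp0 : 0 < p := by linarith
  have hbd : ∀ x, ‖fderiv ℝ w x‖ ≤ L := fun x => norm_fderiv_le_of_lipschitz ℝ hw
  have hmeas : ∀ x, Measurable fun t => fderiv ℝ w (x - t) := fun x =>
    (measurable_fderiv ℝ w).comp (measurable_const.sub measurable_id)
  obtain ⟨C, hC⟩ := hc.exists_bound_of_continuous hw.continuous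
  have hder : ∀ x, HasFDerivAt (fun x => ∫ t, w (x - t) ∂μ) (∫ t, fderiv ℝ w (x - t) ∂μ) x := by
    intro x
    refine (hasFDerivAt_integral_of_dominated_loc_of_lip (s := univ) (bound := fun _ => (L : ℝ))
      univ_mem ?_ ?_ (hmeas x).aestronglyMeasurable ?_ (integrable_const _) ?_).2
    · exact Eventually.of_forall fun y =>
        (hw.continuous.comp (continuous_const.sub continuous_id)).aestronglyMeasurable
    · exact Integrable.of_bound
        (hw.continuous.comp (continuous_const.sub continuous_id)).aestronglyMeasurable C
        (ae_of_all _ fun t => hC _)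
    · refine ae_of_all _ fun t => ?_
      simp only [Real.nnabs_coe]
      refine LipschitzWith.lipschitzOnWith (LipschitzWith.of_dist_le_mul fun y z => ?_)
      simpa using hw.dist_le_mul (y - t) (z - t)
    · have hd : ∀ᵐ y : E2, DifferentiableAt ℝ w y := hw.ae_differentiableAt
      have hd' : ∀ᵐ t : E2, DifferentiableAt ℝ w (x - t) :=
        (Measure.measurePreserving_sub_left volume x).quasiMeasurePreserving.ae hd
      filter_upwards [hμ.ae_le hd'] with t ht
      exact ht.hasFDerivAt.comp x ((hasFDerivAt_id x).sub_const t)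
  have hjensen : ∀ x, ‖fderiv ℝ (fun x => ∫ t, w (x - t) ∂μ) x‖ ^ p
      ≤ ∫ t, ‖fderiv ℝ w (x - t)‖ ^ p ∂μ := by
    intro x
    rw [(hder x).fderiv]
    have hi : Integrable (fun t => ‖fderiv ℝ w (x - t)‖) μ :=
      Integrable.of_bound (hmeas x).norm.aestronglyMeasurable L
        (ae_of_all _ fun t => by simpa using hbd _)
    have hi' : Integrable (fun t => ‖fderiv ℝ w (x - t)‖ ^ p) μ := by
      refine Integrable.of_bound ((hmeas x).norm.pow_const p).aestronglyMeasurable ((L : ℝ) ^ p)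
        (ae_of_all _ fun t => ?_)
      rw [Real.norm_of_nonneg (by positivity)]
      exact Real.rpow_le_rpow (norm_nonneg _) (hbd _) hp0.le
    calc ‖∫ t, fderiv ℝ w (x - t) ∂μ‖ ^ p ≤ (∫ t, ‖fderiv ℝ w (x - t)‖ ∂μ) ^ p :=
          Real.rpow_le_rpow (norm_nonneg _) (norm_integral_le_integral_norm _) hp0.le
      _ ≤ _ := (convexOn_rpow hp).map_integral_le
          (Real.continuous_rpow_const hp0.le).continuousOn isClosed_Ici
          (ae_of_all _ fun t => norm_nonneg _) hi hi'
  have hint := integrable_norm_fderiv_rpow hp0 hw hc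
  have hprod : Integrable (fun z : E2 × E2 => ‖fderiv ℝ w (z.1 - z.2)‖ ^ p)
      (volume.prod μ) := by
    have hm : Measurable (fun z : E2 × E2 => ‖fderiv ℝ w (z.1 - z.2)‖ ^ p) :=
      (measurable_norm_fderiv_rpow p w).comp (measurable_fst.sub measurable_snd)
    rw [integrable_prod_iff' hm.aestronglyMeasurable]
    refine ⟨ae_of_all _ fun t => hint.comp_sub_right t, ?_⟩
    have : (fun t : E2 => ∫ x : E2, ‖‖fderiv ℝ w (x - t)‖ ^ p‖)
        = fun _ => ∫ x : E2, ‖‖fderiv ℝ w x‖ ^ p‖ := by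
      ext t
      exact integral_sub_right_eq_self (fun x => ‖‖fderiv ℝ w x‖ ^ p‖) t
    simp only [this]
    exact integrable_const _
  calc dirichletEnergy p (fun x => ∫ t, w (x - t) ∂μ)
      ≤ ∫ x : E2, ∫ t, ‖fderiv ℝ w (x - t)‖ ^ p ∂μ := by
        refine integral_mono_of_nonneg (ae_of_all _ fun x => by positivity)
          hprod.integral_prod_left (ae_of_all _ hjensen)
    _ = ∫ t, (∫ x : E2, ‖fderiv ℝ w (x - t)‖ ^ p) ∂μ := integral_integral_swap hprod
    _ = ∫ _t, dirichletEnergy p w ∂μ := by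
        congr 1
        ext t
        exact integral_sub_right_eq_self (fun x => ‖fderiv ℝ w x‖ ^ p) t
    _ = dirichletEnergy p w := by simp

/-- A Lipschitz function which equals `1` on a uniform neighbourhood of `K` is an admissible
competitor for the capacity of `K`. -/
lemma pCapacity_le_of_eq_one_near {p : ℝ} (hp : 1 ≤ p) {w : E2 → ℝ} {L : ℝ≥0}
    (hw : LipschitzWith L w) (hc : HasCompactSupport w) {K : Set E2} {r : ℝ} (hr : 0 < r)
    (h1 : ∀ x ∈ K, ∀ y ∈ ball x r, w y = 1) :
    pCapacity p K ≤ dirichletEnergy p w := by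
  set φ : ContDiffBump (0 : E2) := ⟨r / 2, r, half_pos hr, half_lt_self hr⟩
  set μ : Measure E2 := volume.withDensity fun t => ENNReal.ofReal (φ.normed volume t)
  have hφm : Measurable fun t => ENNReal.ofReal (φ.normed volume t) :=
    φ.continuous_normed.measurable.ennreal_ofReal
  have : IsProbabilityMeasure μ := by
    refine ⟨?_⟩
    rw [withDensity_apply _ MeasurableSet.univ, Measure.restrict_univ,
      ← ofReal_integral_eq_lintegral_ofReal φ.integrable_normed
        (ae_of_all _ fun t => φ.nonneg_normed t), φ.integral_normed, ENNReal.ofReal_one]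
  have hconv : (fun x => ∫ t, w (x - t) ∂μ)
      = convolution (φ.normed volume) w (ContinuousLinearMap.lsmul ℝ ℝ) volume := by
    ext x
    rw [convolution_def, integral_withDensity_eq_integral_toReal_smul hφm
      (ae_of_all _ fun _ => ENNReal.ofReal_lt_top)]
    simp [ENNReal.toReal_ofReal, φ.nonneg_normed]
  refine le_trans ?_ (dirichletEnergy_average_le hp hw hc μ (withDensity_absolutelyContinuous _ _))
  rw [hconv]
  refine pCapacity_le ?_ ?_ ?_
  · exact φ.hasCompactSupport_normed.contDiff_convolution_left _ φ.contDiff_normed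
      hw.continuous.locallyIntegrable
  · exact φ.hasCompactSupport_normed.convolution _ hc
  · intro x hx
    rw [φ.normed_convolution_eq_right]
    · exact h1 x hx x (mem_ball_self hr)
    · intro y hy
      rw [h1 x hx y hy, h1 x hx x (mem_ball_self hr)]

/-- Truncating at height one does not increase the energy. -/
lemma dirichletEnergy_min_one_le {p : ℝ} (hp : 0 < p) {w : E2 → ℝ} {L : ℝ≥0}
    (hw : LipschitzWith L w) (hc : HasCompactSupport w) :
    dirichletEnergy p (fun x => min 1 (w x)) ≤ dirichletEnergy p w := by
  refine integral_mono_of_nonneg (ae_of_all _ fun x => by positivity)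
    (integrable_norm_fderiv_rpow hp hw hc) ?_
  filter_upwards with x
  refine Real.rpow_le_rpow (norm_nonneg _) ?_ hp.le
  rcases lt_or_ge (w x) 1 with h | h
  · have : (fun x => min 1 (w x)) =ᶠ[𝓝 x] w := by
      filter_upwards [hw.continuous.continuousAt.eventually_lt continuousAt_const h] with y hy
      exact min_eq_right hy.le
    rw [this.fderiv_eq]
  · have : IsLocalMax (fun x => min 1 (w x)) x := by
      refine Eventually.of_forall fun y => ?_
      simp [h]
    rw [this.fderiv_eq_zero]
    simp

lemma dirichletEnergy_const_mul {p c : ℝ} (hc : 0 ≤ c) (w : E2 → ℝ) :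
    dirichletEnergy p (fun x => c * w x) = c ^ p * dirichletEnergy p w := by
  unfold dirichletEnergy
  rw [← integral_const_mul]
  congr 1
  ext x
  have : fderiv ℝ (fun x => c * w x) x = c • fderiv ℝ w x := by
    simpa [Pi.smul_def] using congrFun (fderiv_const_smul_field (𝕜 := ℝ) (f := w) c) x
  rw [this, norm_smul, Real.norm_of_nonneg hc, Real.mul_rpow hc (norm_nonneg _)]

lemma le_of_forall_rpow_mul {p a b : ℝ} (h : ∀ c : ℝ, 1 < c → a ≤ c ^ p * b) : a ≤ b := by
  have hlim : Tendsto (fun c : ℝ => c ^ p * b) (𝓝[>] 1) (𝓝 ((1 : ℝ) ^ p * b)) :=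
    ((Real.continuousAt_rpow_const 1 p (Or.inl one_ne_zero)).mul
      continuousAt_const).tendsto.mono_left nhdsWithin_le_nhds
  rw [Real.one_rpow, one_mul] at hlim
  exact ge_of_tendsto hlim (eventually_mem_nhdsWithin.mono fun c hc => h c hc)

/-- Lipschitz competitors bound the capacity from above. -/
lemma pCapacity_le_of_lipschitz {p : ℝ} (hp : 1 ≤ p) {w : E2 → ℝ} {L : ℝ≥0}
    (hw : LipschitzWith L w) (hc : HasCompactSupport w) {K : Set E2} (h1 : ∀ x ∈ K, 1 ≤ w x) :
    pCapacity p K ≤ dirichletEnergy p w := by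
  have hp0 : 0 < p := by linarith
  refine le_of_forall_rpow_mul (p := p) fun c hc1 => ?_
  have hLc : LipschitzWith (‖c‖₊ * L) (fun x => c * w x) :=
    (lipschitzWith_smul c).comp hw
  have hcc : HasCompactSupport (fun x => c * w x) := hc.mul_left
  have hm : LipschitzWith (‖c‖₊ * L) (fun x => min 1 (c * w x)) := by
    simpa using (LipschitzWith.const' (1 : ℝ) (α := E2) (K := ‖c‖₊ * L)).min hLc
  have hmc : HasCompactSupport (fun x => min 1 (c * w x)) := by
    refine hcc.comp_left (g := fun s => min 1 s) ?_
    simp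
  rw [← dirichletEnergy_const_mul (by linarith)]
  refine le_trans ?_ (dirichletEnergy_min_one_le hp0 hLc hcc)
  refine pCapacity_le_of_eq_one_near hp hm hmc (r := (c - 1) / (c * (L + 1))) ?_ ?_
  · have := L.coe_nonneg
    have hc0 : 0 < c - 1 := by linarith
    positivity
  · intro x hx y hy
    have hx1 := h1 x hx
    rw [mem_ball, lt_div_iff₀ (by have := L.coe_nonneg; positivity)] at hy
    have hd := hw.dist_le_mul y x
    rw [Real.dist_eq] at hd
    have hd2 := (abs_le.1 hd).1
    rw [min_eq_left]
    nlinarith [dist_nonneg (x := y) (y := x), L.coe_nonneg]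

lemma le_pCapacity {p c : ℝ} {K : Set E2} (hK : Bornology.IsBounded K)
    (h : ∀ u : E2 → ℝ, ContDiff ℝ (⊤ : ℕ∞) u → HasCompactSupport u → (∀ x ∈ K, u x = 1) →
      c ≤ dirichletEnergy p u) : c ≤ pCapacity p K := by
  refine le_csInf ?_ ?_
  · obtain ⟨R, hR0, hR⟩ := hK.subset_closedBall_lt 0 (0 : E2)
    set φ : ContDiffBump (0 : E2) := ⟨R, R + 1, hR0, by linarith⟩
    exact ⟨_, φ, φ.contDiff, φ.hasCompactSupport,
      fun x hx => φ.one_of_mem_closedBall (hR hx), rfl⟩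
  · rintro t ⟨u, hu, hc, h1, rfl⟩
    exact h u hu hc h1

lemma pCapacity_mono {p : ℝ} {K K' : Set E2} (hK : Bornology.IsBounded K') (h : K ⊆ K') :
    pCapacity p K ≤ pCapacity p K' :=
  le_pCapacity hK fun _ hu hc h1 => pCapacity_le hu hc fun x hx => h1 x (h hx)

lemma norm_fderiv_comp_similarity (u : E2 → ℝ) (c : E2) {k : ℝ} (hk : 0 < k)
    (T : E2 ≃ₗᵢ[ℝ] E2) (x : E2) :
    ‖fderiv ℝ (fun y => u (c + k • T y)) x‖ = k * ‖fderiv ℝ u (c + k • T x)‖ := by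
  have h1 : fderiv ℝ (fun y => u (c + k • T y)) x
      = (fderiv ℝ (fun z => u (c + k • z)) (T x)).comp (T : E2 →L[ℝ] E2) :=
    T.toContinuousLinearEquiv.comp_right_fderiv (f := fun z => u (c + k • z)) (x := x)
  have h2 : fderiv ℝ (fun z => u (c + k • z)) (T x) = k • fderiv ℝ u (c + k • T x) := by
    have := fderiv_comp_smul (𝕜 := ℝ) (f := fun z => u (c + z)) (x := T x) k
    rw [this, fderiv_comp_add_left]
  rw [h1, h2, ContinuousLinearMap.opNorm_comp_linearIsometryEquiv, norm_smul,
    Real.norm_of_nonneg hk.le]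

lemma integral_comp_similarity (F : E2 → ℝ) (c : E2) {k : ℝ} (hk : 0 < k)
    (T : E2 ≃ₗᵢ[ℝ] E2) : ∫ x, F (c + k • T x) = (k ^ 2)⁻¹ * ∫ x, F x := by
  rw [T.measurePreserving.integral_comp T.toMeasurableEquiv.measurableEmbedding
    (fun z => F (c + k • z)), Measure.integral_comp_smul volume (fun z => F (c + z)) k,
    integral_add_left_eq_self]
  simp [abs_of_pos hk]

lemma dirichletEnergy_comp_similarity {p : ℝ} (u : E2 → ℝ) (c : E2) {k : ℝ} (hk : 0 < k)
    (T : E2 ≃ₗᵢ[ℝ] E2) :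
    dirichletEnergy p (fun y => u (c + k • T y)) = k ^ (p - 2) * dirichletEnergy p u := by
  unfold dirichletEnergy
  simp_rw [norm_fderiv_comp_similarity u c hk T, Real.mul_rpow hk.le (norm_nonneg _)]
  rw [integral_const_mul, integral_comp_similarity (fun x => ‖fderiv ℝ u x‖ ^ p) c hk T,
    Real.rpow_sub hk, Real.rpow_two, ← mul_assoc, div_eq_mul_inv]

lemma pCapacity_similarity_le {p : ℝ} {K K' : Set E2} (hK : Bornology.IsBounded K) (c : E2)
    {k : ℝ} (hk : 0 < k) (T : E2 ≃ₗᵢ[ℝ] E2) (h : ∀ y ∈ K', c + k • T y ∈ K) :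
    pCapacity p K' ≤ k ^ (p - 2) * pCapacity p K := by
  have hkp : 0 < k ^ (p - 2) := Real.rpow_pos_of_pos hk _
  rw [mul_comm, ← div_le_iff₀ hkp]
  refine le_pCapacity hK fun u hu hc h1 => ?_
  rw [div_le_iff₀ hkp, mul_comm, ← dirichletEnergy_comp_similarity u c hk T]
  refine pCapacity_le ?_ ?_ fun y hy => h1 _ (h y hy)
  · exact hu.comp (contDiff_const.add ((T.contDiff).const_smul k))
  · have := hc.comp_homeomorph ((T.toHomeomorph.trans (Homeomorph.smulOfNeZero k hk.ne')).trans
      (Homeomorph.addLeft c))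
    exact this

lemma norm_sq_eq (x : E2) : ‖x‖ ^ 2 = x 0 ^ 2 + x 1 ^ 2 := by
  rw [EuclideanSpace.norm_sq_eq]
  simp

/-- The linear isometry of the plane with matrix rows `(c, d)` and `(-εd, εc)`. -/
def planeIsometry (c d ε : ℝ) (h : c ^ 2 + d ^ 2 = 1) (hε : ε ^ 2 = 1) : E2 ≃ₗᵢ[ℝ] E2 :=
  LinearIsometry.toLinearIsometryEquiv
    { toFun := fun x => !₂[c * x 0 + d * x 1, ε * (-d * x 0 + c * x 1)]
      map_add' := fun x y => by ext i; fin_cases i <;> simp <;> ring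
      map_smul' := fun k x => by ext i; fin_cases i <;> simp <;> ring
      norm_map' := fun x => by
        refine (pow_left_inj₀ (norm_nonneg _) (norm_nonneg _) two_ne_zero).1 ?_
        rw [norm_sq_eq, norm_sq_eq]
        simp only [LinearMap.coe_mk, AddHom.coe_mk, PiLp.toLp_apply, Matrix.cons_val_zero,
          Matrix.cons_val_one]
        linear_combination (x 0 ^ 2 + x 1 ^ 2) * h + (-d * x 0 + c * x 1) ^ 2 * hε } rfl

lemma planeIsometry_zero {c d ε : ℝ} (h : c ^ 2 + d ^ 2 = 1) (hε : ε ^ 2 = 1) (x : E2) :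
    planeIsometry c d ε h hε x 0 = c * x 0 + d * x 1 := rfl

lemma planeIsometry_one {c d ε : ℝ} (h : c ^ 2 + d ^ 2 = 1) (hε : ε ^ 2 = 1) (x : E2) :
    planeIsometry c d ε h hε x 1 = ε * (-d * x 0 + c * x 1) := rfl

/-- The linear reflection `(x, y) ↦ (-x, y)`. -/
def flipX : E2 ≃ₗᵢ[ℝ] E2 := planeIsometry (-1) 0 (-1) (by norm_num) (by norm_num)

/-- The reflection of the plane in the vertical line `x = s`. -/
def reflectX (s : ℝ) (x : E2) : E2 := !₂[2 * s, 0] + (1 : ℝ) • flipX x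

@[simp] lemma reflectX_zero (s : ℝ) (x : E2) : reflectX s x 0 = 2 * s - x 0 := by
  simp [reflectX, flipX, planeIsometry_zero]; ring

@[simp] lemma reflectX_one (s : ℝ) (x : E2) : reflectX s x 1 = x 1 := by
  simp [reflectX, flipX, planeIsometry_one]

lemma reflectX_reflectX (s : ℝ) (x : E2) : reflectX s (reflectX s x) = x := by
  ext i; fin_cases i <;> simp

lemma dist_sq_eq (x y : E2) : dist x y ^ 2 = (x 0 - y 0) ^ 2 + (x 1 - y 1) ^ 2 := by
  rw [dist_eq_norm, norm_sq_eq]; simp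

lemma dist_reflectX_reflectX (s : ℝ) (x y : E2) :
    dist (reflectX s x) (reflectX s y) = dist x y := by
  simp [reflectX]

lemma dist_reflectX_le {s : ℝ} {x y : E2} (hx : x 0 ≤ s) (hy : s ≤ y 0) :
    dist x (reflectX s y) ≤ dist x y := by
  refine (pow_le_pow_iff_left₀ dist_nonneg dist_nonneg two_ne_zero).1 ?_
  rw [dist_sq_eq, dist_sq_eq]
  simp only [reflectX_zero, reflectX_one]
  nlinarith [mul_nonneg (sub_nonneg.2 hx) (sub_nonneg.2 hy)]

lemma measurePreserving_reflectX (s : ℝ) : MeasurePreserving (reflectX s) := by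
  have := (measurePreserving_add_left volume (!₂[2 * s, 0] : E2)).comp flipX.measurePreserving
  have h : reflectX s = (fun x => !₂[2 * s, 0] + x) ∘ flipX := by
    funext x
    simp [reflectX]
  rwa [h]

lemma integral_comp_reflectX (s : ℝ) (F : E2 → ℝ) : ∫ x, F (reflectX s x) = ∫ x, F x := by
  simpa [reflectX] using integral_comp_similarity F !₂[2 * s, 0] one_pos flipX

lemma norm_fderiv_comp_reflectX (s : ℝ) (u : E2 → ℝ) (x : E2) :
    ‖fderiv ℝ (fun y => u (reflectX s y)) x‖ = ‖fderiv ℝ u (reflectX s x)‖ := by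
  simpa [reflectX] using norm_fderiv_comp_similarity u !₂[2 * s, 0] one_pos flipX x

lemma continuous_reflectX (s : ℝ) : Continuous (reflectX s) := by
  unfold reflectX
  fun_prop

/-- Polarization (two-point rearrangement) of `u` in the line `x = s`, moving the larger values
to the left. -/
def polarize (s : ℝ) (u : E2 → ℝ) (x : E2) : ℝ :=
  if x 0 ≤ s then max (u x) (u (reflectX s x)) else min (u x) (u (reflectX s x))

lemma polarize_lipschitz {s : ℝ} {u : E2 → ℝ} {L : ℝ≥0} (hu : LipschitzWith L u) :
    LipschitzWith L (polarize s u) := by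
  have hv : LipschitzWith L (fun x => u (reflectX s x)) :=
    LipschitzWith.of_dist_le_mul fun x y => by
      rw [← dist_reflectX_reflectX s x y]; exact hu.dist_le_mul _ _
  have hF : LipschitzWith L (fun x => max (u x) (u (reflectX s x))) := by
    simpa using hu.max hv
  have hG : LipschitzWith L (fun x => min (u x) (u (reflectX s x))) := by
    simpa using hu.min hv
  have mixed : ∀ x y : E2, x 0 ≤ s → s < y 0 →
      |max (u x) (u (reflectX s x)) - min (u y) (u (reflectX s y))| ≤ L * dist x y := by
    intro x y hx hy
    have close : ∀ a b : E2, dist a b ≤ dist x y → |u a - u b| ≤ L * dist x y := fun a b hab =>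
      (hu.dist_le_mul a b).trans (mul_le_mul_of_nonneg_left hab L.coe_nonneg)
    have d1 := dist_reflectX_le hx hy.le
    have d2 : dist (reflectX s x) y ≤ dist x y := by
      rw [← dist_reflectX_reflectX s (reflectX s x) y, reflectX_reflectX]; exact d1
    have h1 := close x y le_rfl
    have h2 := close x (reflectX s y) d1
    have h3 := close (reflectX s x) y d2
    have h4 := close (reflectX s x) (reflectX s y) (dist_reflectX_reflectX s x y).le
    rcases max_choice (u x) (u (reflectX s x)) with h | h <;>
    rcases min_choice (u y) (u (reflectX s y)) with h' | h' <;> rw [h, h'] <;> assumption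
  refine LipschitzWith.of_dist_le_mul fun x y => ?_
  unfold polarize
  split_ifs with hx hy hy
  · exact hF.dist_le_mul x y
  · exact mixed x y hx (not_le.1 hy)
  · rw [dist_comm, dist_comm x]; exact mixed y x hy (not_le.1 hx)
  · exact hG.dist_le_mul x y

lemma polarize_hasCompactSupport {s : ℝ} {u : E2 → ℝ} (hc : HasCompactSupport u) :
    HasCompactSupport (polarize s u) := by
  refine HasCompactSupport.intro
    (hc.isCompact.union (hc.isCompact.image (continuous_reflectX s))) fun x hx => ?_
  have h1 : u x = 0 := image_eq_zero_of_notMem_tsupport fun h => hx (Or.inl h)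
  have h2 : u (reflectX s x) = 0 := image_eq_zero_of_notMem_tsupport fun h =>
    hx (Or.inr ⟨_, h, reflectX_reflectX s x⟩)
  simp [polarize, h1, h2]

lemma ae_coord_ne (s : ℝ) : ∀ᵐ x : E2, x 0 ≠ s := by
  have h : ∀ᵐ f : Fin 2 → ℝ, f 0 ≠ s := Measure.ae_eval_ne (fun _ : Fin 2 => (volume : Measure ℝ)) 0 s
  exact (EuclideanSpace.volume_preserving_symm_measurableEquiv_toLp
    (Fin 2)).quasiMeasurePreserving.ae h

/-- At a point of differentiability, taking maximum and minimum only permutes the gradients. -/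
lemma norm_fderiv_max_add_min (p : ℝ) {u v : E2 → ℝ} {x : E2} (hu : DifferentiableAt ℝ u x)
    (hv : DifferentiableAt ℝ v x) (hF : DifferentiableAt ℝ (fun y => max (u y) (v y)) x)
    (hG : DifferentiableAt ℝ (fun y => min (u y) (v y)) x) :
    ‖fderiv ℝ (fun y => max (u y) (v y)) x‖ ^ p + ‖fderiv ℝ (fun y => min (u y) (v y)) x‖ ^ p
      = ‖fderiv ℝ u x‖ ^ p + ‖fderiv ℝ v x‖ ^ p := by
  rcases lt_trichotomy (u x) (v x) with h | h | h
  · have he := hu.continuousAt.eventually_lt hv.continuousAt h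
    have h1 : (fun y => max (u y) (v y)) =ᶠ[𝓝 x] v := he.mono fun y hy => max_eq_right hy.le
    have h2 : (fun y => min (u y) (v y)) =ᶠ[𝓝 x] u := he.mono fun y hy => min_eq_left hy.le
    rw [h1.fderiv_eq, h2.fderiv_eq, add_comm]
  · have touch : ∀ f g : E2 → ℝ, DifferentiableAt ℝ f x → DifferentiableAt ℝ g x →
        (∀ y, g y ≤ f y) → f x = g x → fderiv ℝ f x = fderiv ℝ g x := by
      intro f g hf hg hle heq
      have hmin : IsLocalMin (f - g) x := Eventually.of_forall fun y => by
        simp [heq, hle y]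
      have := hmin.fderiv_eq_zero
      rwa [fderiv_sub hf hg, sub_eq_zero] at this
    rw [touch _ u hF hu (fun y => le_max_left _ _) (by simp [h]),
      ← touch v _ hv hG (fun y => min_le_right _ _) (by simp [h])]
  · have he := hv.continuousAt.eventually_lt hu.continuousAt h
    have h1 : (fun y => max (u y) (v y)) =ᶠ[𝓝 x] u := he.mono fun y hy => max_eq_left hy.le
    have h2 : (fun y => min (u y) (v y)) =ᶠ[𝓝 x] v := he.mono fun y hy => min_eq_right hy.le
    rw [h1.fderiv_eq, h2.fderiv_eq]

/-- Polarization preserves the energy. -/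
lemma dirichletEnergy_polarize {p : ℝ} (hp : 0 < p) {s : ℝ} {u : E2 → ℝ} {L : ℝ≥0}
    (hu : LipschitzWith L u) (hc : HasCompactSupport u) :
    dirichletEnergy p (polarize s u) = dirichletEnergy p u := by
  have hv : LipschitzWith L (fun x => u (reflectX s x)) :=
    LipschitzWith.of_dist_le_mul fun x y => by
      rw [← dist_reflectX_reflectX s x y]; exact hu.dist_le_mul _ _
  have hF : LipschitzWith L (fun x => max (u x) (u (reflectX s x))) := by
    simpa using hu.max hv
  have hG : LipschitzWith L (fun x => min (u x) (u (reflectX s x))) := by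
    simpa using hu.min hv
  have hcoord : Continuous fun y : E2 => y 0 := by fun_prop
  have left : ∀ᵐ x : E2, x 0 < s →
      ‖fderiv ℝ (polarize s u) x‖ ^ p + ‖fderiv ℝ (polarize s u) (reflectX s x)‖ ^ p
        = ‖fderiv ℝ u x‖ ^ p + ‖fderiv ℝ u (reflectX s x)‖ ^ p := by
    filter_upwards [hu.ae_differentiableAt, hv.ae_differentiableAt, hF.ae_differentiableAt,
      hG.ae_differentiableAt] with x h1 h2 h3 h4 hx
    have e1 : polarize s u =ᶠ[𝓝 x] fun y => max (u y) (u (reflectX s y)) := by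
      filter_upwards [hcoord.continuousAt.eventually_lt continuousAt_const hx] with y hy
      exact if_pos hy.le
    have e2 : polarize s u =ᶠ[𝓝 (reflectX s x)] fun y => min (u y) (u (reflectX s y)) := by
      have hx' : s < reflectX s x 0 := by simp; linarith
      filter_upwards [continuousAt_const.eventually_lt hcoord.continuousAt hx'] with y hy
      exact if_neg (not_le.2 hy)
    rw [e1.fderiv_eq, e2.fderiv_eq, ← norm_fderiv_comp_reflectX, ← norm_fderiv_comp_reflectX s u x,
      ← norm_fderiv_max_add_min p h1 h2 h3 h4]
    simp only [reflectX_reflectX]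
    simp_rw [min_comm]
  have both : ∀ᵐ x : E2,
      ‖fderiv ℝ (polarize s u) x‖ ^ p + ‖fderiv ℝ (polarize s u) (reflectX s x)‖ ^ p
        = ‖fderiv ℝ u x‖ ^ p + ‖fderiv ℝ u (reflectX s x)‖ ^ p := by
    filter_upwards [left, (measurePreserving_reflectX s).quasiMeasurePreserving.ae left,
      ae_coord_ne s] with x h1 h2 h3
    rcases lt_or_gt_of_ne h3 with h | h
    · exact h1 h
    · have := h2 (by simp; linarith)
      rw [reflectX_reflectX] at this
      linarith
  have i1 := integrable_norm_fderiv_rpow hp (polarize_lipschitz (s := s) hu)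
    (polarize_hasCompactSupport (s := s) hc)
  have i2 := integrable_norm_fderiv_rpow hp hu hc
  have h := integral_congr_ae both
  rw [integral_add i1, integral_add i2,
    integral_comp_reflectX s (fun x => ‖fderiv ℝ (polarize s u) x‖ ^ p),
    integral_comp_reflectX s (fun x => ‖fderiv ℝ u x‖ ^ p)] at h
  · unfold dirichletEnergy
    linarith
  · exact (measurePreserving_reflectX s).integrable_comp_of_integrable i2
  · exact (measurePreserving_reflectX s).integrable_comp_of_integrable i1

/-- The set `A` is a union of horizontal segments centred on the axis `x = 0`. -/
def HorizontallyBalanced (A : Set E2) : Prop :=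
  ∀ x ∈ A, ∀ y : E2, y 1 = x 1 → |y 0| ≤ |x 0| → y ∈ A

/-- Polarization folds the centres of horizontal segments. -/
lemma one_le_polarize {A : Set E2} (hA : HorizontallyBalanced A) {u : E2 → ℝ} {m : ℝ → ℝ}
    (h1 : ∀ x : E2, !₂[x 0 - m (x 1), x 1] ∈ A → 1 ≤ u x) (s : ℝ) (x : E2)
    (hx : !₂[x 0 - min (m (x 1)) (2 * s - m (x 1)), x 1] ∈ A) : 1 ≤ polarize s u x := by
  have hmem : ∀ t : ℝ, |t - m (x 1)| ≤ |x 0 - min (m (x 1)) (2 * s - m (x 1))| →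
      !₂[t - m (x 1), x 1] ∈ A := fun t ht => hA _ hx _ rfl (by simpa using ht)
  have hx0 : |x 0 - m (x 1)| ≤ |x 0 - min (m (x 1)) (2 * s - m (x 1))| → 1 ≤ u x := fun h =>
    h1 x (hmem _ h)
  have hσ : |2 * s - x 0 - m (x 1)| ≤ |x 0 - min (m (x 1)) (2 * s - m (x 1))| →
      1 ≤ u (reflectX s x) := fun h => h1 _ (by simpa using hmem _ h)
  unfold polarize
  rcases le_total (m (x 1)) s with hm | hm
  · rw [min_eq_left (by linarith)] at hx0 hσ
    have hu := hx0 le_rfl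
    split_ifs with hxs
    · exact le_max_of_le_left hu
    · refine le_min hu (hσ ?_)
      rw [abs_of_nonneg (a := x 0 - m (x 1)) (by linarith), abs_le]
      constructor <;> linarith
  · rw [min_eq_right (by linarith)] at hx0 hσ
    have hu := hσ (by rw [← abs_neg]; apply le_of_eq; congr 1; ring)
    split_ifs with hxs
    · exact le_max_of_le_right hu
    · refine le_min (hx0 ?_) hu
      rw [abs_of_nonneg (a := x 0 - (2 * s - m (x 1))) (by linarith), abs_le]
      constructor <;> linarith

/-- Finitely many polarizations bring the centres of all segments arbitrarily close together. -/
lemma exists_concentrated {p : ℝ} (hp : 0 < p) {A : Set E2} (hA : HorizontallyBalanced A)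
    {u : E2 → ℝ} {L : ℝ≥0} (hu : LipschitzWith L u) (hc : HasCompactSupport u) {m : ℝ → ℝ}
    {c d : ℝ} (hm : ∀ y, m y ∈ Icc c (c + d))
    (h1 : ∀ x : E2, !₂[x 0 - m (x 1), x 1] ∈ A → 1 ≤ u x) (n : ℕ) :
    ∃ v : E2 → ℝ, LipschitzWith L v ∧ HasCompactSupport v ∧
      dirichletEnergy p v = dirichletEnergy p u ∧
      ∃ m' : ℝ → ℝ, (∀ y, m' y ∈ Icc c (c + d / 2 ^ n)) ∧
        ∀ x : E2, !₂[x 0 - m' (x 1), x 1] ∈ A → 1 ≤ v x := by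
  induction n with
  | zero => exact ⟨u, hu, hc, rfl, m, by simpa using hm, h1⟩
  | succ n ih =>
    obtain ⟨v, hv, hvc, he, m', hm', h1'⟩ := ih
    have hd : 2 * (d / 2 ^ (n + 1)) = d / 2 ^ n := by
      rw [pow_succ]; field_simp
    refine ⟨polarize (c + d / 2 ^ (n + 1)) v, polarize_lipschitz hv,
      polarize_hasCompactSupport hvc, (dirichletEnergy_polarize hp hv hvc).trans he,
      fun y => min (m' y) (2 * (c + d / 2 ^ (n + 1)) - m' y), fun y => ⟨?_, ?_⟩,
      one_le_polarize hA h1' _⟩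
    · refine le_min (hm' y).1 ?_
      have := (hm' y).2
      linarith
    · rcases le_total (m' y) (c + d / 2 ^ (n + 1)) with h | h
      · exact min_le_of_left_le h
      · exact min_le_of_right_le (by linarith)

/-- Centring the horizontal segments of a set (Steiner symmetrization) does not increase
the capacity. -/
lemma pCapacity_le_of_shear {p : ℝ} (hp : 1 ≤ p) {A K : Set E2} (hA : HorizontallyBalanced A)
    (hK : Bornology.IsBounded K) {M : ℝ → ℝ} {C : ℝ} (hM : ∀ x ∈ A, |M (x 1)| ≤ C)
    (h : ∀ x : E2, !₂[x 0 - M (x 1), x 1] ∈ A → x ∈ K) :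
    pCapacity p A ≤ pCapacity p K := by
  rcases A.eq_empty_or_nonempty with rfl | ⟨x₀, hx₀⟩
  · exact pCapacity_mono hK (empty_subset _)
  have hC : 0 ≤ C := (abs_nonneg _).trans (hM x₀ hx₀)
  have hp0 : 0 < p := by linarith
  refine le_pCapacity hK fun u hu hc hu1 => ?_
  obtain ⟨L, hL⟩ := ContDiff.lipschitzWith_of_hasCompactSupport hc hu (by simp)
  refine le_of_forall_rpow_mul (p := p) fun c hc1 => ?_
  set m : ℝ → ℝ := fun y => if |M y| ≤ C then M y else 0
  have hm : ∀ y, m y ∈ Icc (-C) (-C + 2 * C) := by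
    intro y
    simp only [m]
    split_ifs with hy
    · have := abs_le.1 hy
      constructor <;> linarith
    · constructor <;> linarith
  have hm1 : ∀ x : E2, !₂[x 0 - m (x 1), x 1] ∈ A → 1 ≤ u x := by
    intro x hx
    have hMx : m (x 1) = M (x 1) := if_pos (by simpa using hM _ hx)
    rw [hMx] at hx
    exact (hu1 x (h x hx)).ge
  have hlim : Tendsto (fun n : ℕ => c * (1 - L * (2 * C / 2 ^ n))) atTop (𝓝 (c * (1 - L * 0))) := by
    refine (tendsto_const_nhds.sub (Tendsto.const_mul _ ?_)).const_mul _
    exact tendsto_const_nhds.div_atTop (tendsto_pow_atTop_atTop_of_one_lt (by norm_num))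
  obtain ⟨n, hn⟩ := (hlim.eventually (lt_mem_nhds (show 1 < c * (1 - L * 0) by linarith))).exists
  obtain ⟨v, hv, hvc, he, m', hm', h1'⟩ := exists_concentrated hp0 hA hL hc hm hm1 n
  set w : E2 → ℝ := fun x => v (!₂[-C, 0] + (1 : ℝ) • LinearIsometryEquiv.refl ℝ E2 x)
  have hw : LipschitzWith L w := LipschitzWith.of_dist_le_mul fun x y => by
    simpa [w] using hv.dist_le_mul (!₂[-C, 0] + x) (!₂[-C, 0] + y)
  have hwc : HasCompactSupport w := by
    simpa [w, Function.comp_def] using hvc.comp_homeomorph (Homeomorph.addLeft (!₂[-C, 0] : E2))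
  have hwe : dirichletEnergy p w = dirichletEnergy p u := by
    rw [dirichletEnergy_comp_similarity v _ one_pos, Real.one_rpow, one_mul, he]
  rw [← hwe, ← dirichletEnergy_const_mul (by linarith)]
  refine pCapacity_le_of_lipschitz hp (L := ‖c‖₊ * L) ((lipschitzWith_smul c).comp hw)
    hwc.mul_left fun x hx => ?_
  have hz := h1' !₂[x 0 + m' (x 1), x 1] (hA x hx _ (by simp) (by simp))
  have hdist : dist (!₂[x 0 + m' (x 1), x 1] : E2) (!₂[-C, 0] + x) ≤ 2 * C / 2 ^ n := by
    have hm2 := hm' (x 1)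
    refine (pow_le_pow_iff_left₀ dist_nonneg (by positivity) two_ne_zero).1 ?_
    rw [dist_sq_eq]
    have : 0 ≤ m' (x 1) + C := by linarith [hm2.1]
    have h2 : m' (x 1) + C ≤ 2 * C / 2 ^ n := by linarith [hm2.2]
    simp
    calc _ = (m' (x 1) + C) ^ 2 := by ring
      _ ≤ _ := by gcongr
  have hlip := (le_abs_self _).trans (hv.dist_le_mul !₂[x 0 + m' (x 1), x 1] (!₂[-C, 0] + x))
  have hLd := mul_le_mul_of_nonneg_left hdist L.coe_nonneg
  have hwx : 1 - L * (2 * C / 2 ^ n) ≤ w x := by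
    simp only [w, one_smul, LinearIsometryEquiv.coe_refl, id]
    linarith
  show 1 ≤ c * w x
  nlinarith

/-- The hexagon with vertices `(±a, ±h)` and `(0, ±b)`. -/
def boxHex (a h b : ℝ) : Set E2 := {x | |x 0| ≤ a ∧ (b - h) * |x 0| + a * |x 1| ≤ a * b}

/-- The centrally symmetric hexagon with vertices `±p`, `±q`, `±r`. -/
def hexHull (p q r : E2) : Set E2 := convexHull ℝ {p, q, r, -p, -q, -r}

lemma boxHex_balanced {a h b : ℝ} (hb : h ≤ b) : HorizontallyBalanced (boxHex a h b) := by
  rintro x ⟨h0, h1⟩ y hy hle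
  refine ⟨hle.trans h0, ?_⟩
  rw [hy]
  nlinarith

lemma abs_snd_le_of_mem_boxHex {a h b : ℝ} (ha : 0 < a) (hb : h ≤ b) {x : E2}
    (hx : x ∈ boxHex a h b) : |x 1| ≤ b := by
  have h2 : a * |x 1| ≤ a * b := by nlinarith [hx.2, abs_nonneg (x 0)]
  exact le_of_mul_le_mul_left h2 ha

lemma boxHex_bounded {a h b : ℝ} (ha : 0 < a) (hb : h ≤ b) :
    Bornology.IsBounded (boxHex a h b) := by
  refine isBounded_iff_forall_norm_le.2 ⟨a + b, fun x hx => ?_⟩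
  have h1 := abs_snd_le_of_mem_boxHex ha hb hx
  have h0 := hx.1
  have hb0 := (abs_nonneg _).trans h1
  refine (pow_le_pow_iff_left₀ (norm_nonneg _) (by positivity) two_ne_zero).1 ?_
  rw [norm_sq_eq, ← sq_abs (x 0), ← sq_abs (x 1)]
  nlinarith [abs_nonneg (x 0), abs_nonneg (x 1)]

lemma hexHull_bounded (p q r : E2) : Bornology.IsBounded (hexHull p q r) := by
  refine isBounded_convexHull.2 (Set.Finite.isBounded ?_)
  simp

lemma Convex.three_mem {C : Set E2} (hC : Convex ℝ C) {x y z : E2} (hx : x ∈ C) (hy : y ∈ C)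
    (hz : z ∈ C) {a b c : ℝ} (ha : 0 ≤ a) (hb : 0 ≤ b) (hc : 0 ≤ c) (h : a + b + c = 1) :
    a • x + b • y + c • z ∈ C := by
  have := hC.sum_mem (t := Finset.univ) (w := ![a, b, c]) (z := ![x, y, z])
    (by intro i _; fin_cases i <;> simpa) (by simpa [Fin.sum_univ_three] using h)
    (by intro i _; fin_cases i <;> simpa)
  simpa [Fin.sum_univ_three] using this

/-- The coordinate by which the caps `1 ≤ |v| ≤ t` are slanted. -/
def capHeight (t v : ℝ) : ℝ := (v - max (-1) (min v 1)) / (t - 1)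

lemma capHeight_of_abs_le {t v : ℝ} (h : |v| ≤ 1) : capHeight t v = 0 := by
  rw [abs_le] at h
  rw [capHeight, min_eq_left h.2, max_eq_right h.1, sub_self, zero_div]

lemma capHeight_of_one_le {t v : ℝ} (h : 1 ≤ v) : capHeight t v = (v - 1) / (t - 1) := by
  rw [capHeight, min_eq_right h, max_eq_right (by norm_num)]

lemma capHeight_of_le_neg_one {t v : ℝ} (h : v ≤ -1) : capHeight t v = (v + 1) / (t - 1) := by
  rw [capHeight, min_eq_left (by linarith), max_eq_left h, sub_neg_eq_add]

lemma measurable_capHeight (t : ℝ) : Measurable (capHeight t) := by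
  unfold capHeight
  fun_prop

/-- The horizontal shift carrying a centred hexagon to a slanted one. -/
def hexShift (a h g s t y : ℝ) : ℝ := g * (y / h) + s * a * capHeight t (y / h)

lemma measurable_hexShift (a h g s t : ℝ) : Measurable (hexShift a h g s t) := by
  have := measurable_capHeight t
  unfold hexShift
  fun_prop

lemma slanted_mem_hexHull {p q : E2} {s t u v : ℝ}
    (hu : |u| ≤ 1) (hv : (t - 1) * |u| + |v| ≤ t) :
    ((u + s * capHeight t v) / 2) • (p + q) + (v / 2) • (q - p) ∈
      hexHull p q ((s / 2) • (p + q) + (t / 2) • (q - p)) := by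
  set r := (s / 2) • (p + q) + (t / 2) • (q - p) with hr
  have hC : Convex ℝ (hexHull p q r) := convex_convexHull _ _
  have hsub : ({p, q, r, -p, -q, -r} : Set E2) ⊆ hexHull p q r := subset_convexHull ℝ _
  have hp : p ∈ hexHull p q r := hsub (by simp)
  have hq : q ∈ hexHull p q r := hsub (by simp)
  have hrm : r ∈ hexHull p q r := hsub (by simp)
  have hp' : -p ∈ hexHull p q r := hsub (by simp)
  have hq' : -q ∈ hexHull p q r := hsub (by simp)
  have hr' : -r ∈ hexHull p q r := hsub (by simp)
  have hu2 := abs_le.1 hu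
  rcases le_or_gt |v| 1 with h1 | h1
  · have hv2 := abs_le.1 h1
    rw [capHeight_of_abs_le h1]
    have htop := hC hq hp' (a := (1 + u) / 2) (b := (1 - u) / 2) (by linarith) (by linarith)
      (by ring)
    have hbot := hC hp hq' (a := (1 + u) / 2) (b := (1 - u) / 2) (by linarith) (by linarith)
      (by ring)
    have := hC htop hbot (a := (1 + v) / 2) (b := (1 - v) / 2) (by linarith) (by linarith)
      (by ring)
    convert this using 1
    module
  have ht1 : 1 < t := by
    by_contra! hle
    nlinarith [abs_nonneg u]
  have ht0 : 0 < t - 1 := by linarith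
  have key : ∀ w, w = |v| → |u| ≤ 1 - (w - 1) / (t - 1) ∧ 0 ≤ (w - 1) / (t - 1) := by
    rintro w rfl
    refine ⟨?_, div_nonneg (by linarith) ht0.le⟩
    rw [le_sub_iff_add_le, ← le_sub_iff_add_le', div_le_iff₀ ht0]
    linarith
  rcases le_or_gt 0 v with h0 | h0
  · rw [abs_of_nonneg h0] at h1
    rw [capHeight_of_one_le h1.le]
    obtain ⟨k1, k2⟩ := key v (abs_of_nonneg h0).symm
    obtain ⟨θ, hθ⟩ : ∃ θ, θ = (v - 1) / (t - 1) := ⟨_, rfl⟩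
    rw [← hθ] at k1 k2 ⊢
    have hvθ : v = 1 + θ * (t - 1) := by rw [hθ]; field_simp; ring
    have k3 := abs_le.1 k1
    have := hC.three_mem hrm hq hp' (a := θ) (b := (1 - θ + u) / 2) (c := (1 - θ - u) / 2) k2
      (by linarith) (by linarith) (by ring)
    convert this using 1
    rw [hvθ, hr]
    module
  · rw [abs_of_neg h0] at h1
    rw [capHeight_of_le_neg_one (by linarith)]
    obtain ⟨k1, k2⟩ := key (-v) (abs_of_neg h0).symm
    obtain ⟨θ, hθ⟩ : ∃ θ, θ = (-v - 1) / (t - 1) := ⟨_, rfl⟩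
    rw [show (v + 1) / (t - 1) = -θ by rw [hθ]; ring]
    rw [← hθ] at k1 k2
    have hvθ : v = -(1 + θ * (t - 1)) := by rw [hθ]; field_simp; ring
    have k3 := abs_le.1 k1
    have := hC.three_mem hr' hp hq' (a := θ) (b := (1 - θ + u) / 2) (c := (1 - θ - u) / 2) k2
      (by linarith) (by linarith) (by ring)
    convert this using 1
    rw [hvθ, hr]
    module

lemma slanted_bounds {s t u v : ℝ} (ht : 1 ≤ t) (h1 : |u| ≤ 1) (h2 : |v| ≤ t)
    (h3 : |(t - 1) * u + (1 - s) * v| ≤ t - s) (h4 : |(1 + s) * v - (t - 1) * u| ≤ t + s) :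
    |u - s * capHeight t v| ≤ 1 ∧ (t - 1) * |u - s * capHeight t v| + |v| ≤ t := by
  rcases le_or_gt |v| 1 with hv | hv
  · rw [capHeight_of_abs_le hv]
    simp only [mul_zero, sub_zero]
    exact ⟨h1, by nlinarith⟩
  have ht0 : 0 < t - 1 := by linarith
  suffices hs : (t - 1) * |u - s * capHeight t v| + |v| ≤ t from
    ⟨le_of_mul_le_mul_left (by linarith) ht0, hs⟩
  rw [abs_le] at h3 h4
  rw [← le_sub_iff_add_le, ← abs_of_pos ht0, ← abs_mul, mul_sub]
  rcases le_or_gt 0 v with h0 | h0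
  · rw [abs_of_nonneg h0] at *
    rw [capHeight_of_one_le hv.le, show (t - 1) * (s * ((v - 1) / (t - 1))) = s * (v - 1) by
      field_simp, abs_le]
    constructor <;> linarith
  · rw [abs_of_neg h0] at *
    rw [capHeight_of_le_neg_one (by linarith),
      show (t - 1) * (s * ((v + 1) / (t - 1))) = s * (v + 1) by field_simp, abs_le]
    constructor <;> linarith

lemma mem_boxHex_mul_iff {a h t : ℝ} (ha : 0 < a) (hh : 0 < h) (u v : ℝ) :
    (!₂[a * u, h * v] : E2) ∈ boxHex a h (t * h) ↔ |u| ≤ 1 ∧ (t - 1) * |u| + |v| ≤ t := by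
  simp only [boxHex, mem_ofPred_eq, Matrix.cons_val_zero, Matrix.cons_val_one,
    abs_mul, abs_of_pos ha, abs_of_pos hh]
  refine and_congr (by rw [mul_le_iff_le_one_right ha]) ?_
  rw [show (t * h - h) * (a * |u|) + a * (h * |v|) = (a * h) * ((t - 1) * |u| + |v|) by ring,
    show a * (t * h) = (a * h) * t by ring, mul_le_mul_iff_right₀ (by positivity)]

lemma mem_hexHull_iff {a h g s t : ℝ} (ha : 0 < a) (hh : 0 < h) (hs : |s| ≤ 1) (ht : 1 ≤ t)
    (x : E2) :
    x ∈ hexHull !₂[a - g, -h] !₂[a + g, h] !₂[s * a + t * g, t * h] ↔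
      !₂[x 0 - hexShift a h g s t (x 1), x 1] ∈ boxHex a h (t * h) := by
  obtain ⟨u, v, rfl⟩ : ∃ u v : ℝ, x = !₂[a * u + g * v, h * v] := by
    refine ⟨(x 0 - g * (x 1 / h)) / a, x 1 / h, ?_⟩
    ext i
    fin_cases i <;> simp <;> field_simp
    ring
  have hsh : (!₂[(!₂[a * u + g * v, h * v] : E2) 0 -
      hexShift a h g s t ((!₂[a * u + g * v, h * v] : E2) 1), (!₂[a * u + g * v, h * v] : E2) 1] :
      E2) = !₂[a * (u - s * capHeight t v), h * v] := by
    ext i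
    fin_cases i
    · simp only [hexShift, Matrix.cons_val_zero, Matrix.cons_val_one, Fin.zero_eta,
        mul_div_cancel_left₀ _ hh.ne']
      ring
    · simp
  rw [hsh, mem_boxHex_mul_iff ha hh]
  constructor
  · intro hx
    set C : Set E2 := {x | |h * x 0 - g * x 1| ≤ a * h ∧ |x 1| ≤ t * h ∧
      |(t - 1) * (h * x 0 - g * x 1) + (1 - s) * (a * x 1)| ≤ (t - s) * (a * h) ∧
      |(1 + s) * (a * x 1) - (t - 1) * (h * x 0 - g * x 1)| ≤ (t + s) * (a * h)} with hCdef
    have hC : Convex ℝ C := by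
      intro y hy z hz α β hα hβ hαβ
      simp only [hCdef, mem_ofPred_eq, abs_le, PiLp.add_apply, PiLp.smul_apply, smul_eq_mul] at *
      obtain ⟨⟨a1, a2⟩, ⟨a3, a4⟩, ⟨a5, a6⟩, ⟨a7, a8⟩⟩ := hy
      obtain ⟨⟨b1, b2⟩, ⟨b3, b4⟩, ⟨b5, b6⟩, ⟨b7, b8⟩⟩ := hz
      obtain rfl : β = 1 - α := by linarith
      refine ⟨⟨?_, ?_⟩, ⟨?_, ?_⟩, ⟨?_, ?_⟩, ⟨?_, ?_⟩⟩
      · linarith [mul_le_mul_of_nonneg_left a1 hα, mul_le_mul_of_nonneg_left b1 hβ]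
      · linarith [mul_le_mul_of_nonneg_left a2 hα, mul_le_mul_of_nonneg_left b2 hβ]
      · linarith [mul_le_mul_of_nonneg_left a3 hα, mul_le_mul_of_nonneg_left b3 hβ]
      · linarith [mul_le_mul_of_nonneg_left a4 hα, mul_le_mul_of_nonneg_left b4 hβ]
      · linarith [mul_le_mul_of_nonneg_left a5 hα, mul_le_mul_of_nonneg_left b5 hβ]
      · linarith [mul_le_mul_of_nonneg_left a6 hα, mul_le_mul_of_nonneg_left b6 hβ]
      · linarith [mul_le_mul_of_nonneg_left a7 hα, mul_le_mul_of_nonneg_left b7 hβ]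
      · linarith [mul_le_mul_of_nonneg_left a8 hα, mul_le_mul_of_nonneg_left b8 hβ]
    have hah : 0 < a * h := by positivity
    have hs' := abs_le.1 hs
    have hneg : ∀ y ∈ C, -y ∈ C := by
      rintro y ⟨c1, c2, c3, c4⟩
      simp only [hCdef, mem_ofPred_eq, PiLp.neg_apply]
      refine ⟨?_, ?_, ?_, ?_⟩ <;> rw [← abs_neg]
      · convert c1 using 2; ring
      · convert c2 using 2; ring
      · convert c3 using 2; ring
      · convert c4 using 2; ring
    have hmem : ∀ u v : ℝ, (!₂[a * u + g * v, h * v] : E2) ∈ C ↔ |u| ≤ 1 ∧ |v| ≤ t ∧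
        |(t - 1) * u + (1 - s) * v| ≤ t - s ∧ |(1 + s) * v - (t - 1) * u| ≤ t + s := by
      intro u v
      simp only [hCdef, mem_ofPred_eq, Matrix.cons_val_zero, Matrix.cons_val_one]
      have e1 : h * (a * u + g * v) - g * (h * v) = u * (a * h) := by ring
      rw [e1, show (t - 1) * (u * (a * h)) + (1 - s) * (a * (h * v)) =
          ((t - 1) * u + (1 - s) * v) * (a * h) by ring,
        show (1 + s) * (a * (h * v)) - (t - 1) * (u * (a * h)) =
          ((1 + s) * v - (t - 1) * u) * (a * h) by ring, mul_comm h v]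
      simp only [abs_mul _ (a * h), abs_mul _ h, abs_of_pos ha, abs_of_pos hh,
        mul_le_mul_iff_left₀ hah, mul_le_mul_iff_left₀ hh, mul_le_iff_le_one_left hah]
    have hp : (!₂[a - g, -h] : E2) ∈ C := by
      rw [show (!₂[a - g, -h] : E2) = !₂[a * 1 + g * (-1), h * (-1)] by
        ext i; fin_cases i <;> simp; ring, hmem]
      simp only [abs_le]
      refine ⟨⟨?_, ?_⟩, ⟨?_, ?_⟩, ⟨?_, ?_⟩, ?_, ?_⟩ <;> linarith
    have hq : (!₂[a + g, h] : E2) ∈ C := by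
      rw [show (!₂[a + g, h] : E2) = !₂[a * 1 + g * 1, h * 1] by
        ext i; fin_cases i <;> simp, hmem]
      simp only [abs_le]
      refine ⟨⟨?_, ?_⟩, ⟨?_, ?_⟩, ⟨?_, ?_⟩, ?_, ?_⟩ <;> linarith
    have hr : (!₂[s * a + t * g, t * h] : E2) ∈ C := by
      rw [show (!₂[s * a + t * g, t * h] : E2) = !₂[a * s + g * t, h * t] by
        ext i; fin_cases i <;> simp <;> ring, hmem]
      simp only [abs_le]
      refine ⟨⟨?_, ?_⟩, ⟨?_, ?_⟩, ⟨?_, ?_⟩, ?_, ?_⟩ <;> nlinarith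
    have hsub : hexHull !₂[a - g, -h] !₂[a + g, h] !₂[s * a + t * g, t * h] ⊆ C := by
      refine convexHull_min ?_ hC
      rintro y (rfl | rfl | rfl | rfl | rfl | rfl)
      exacts [hp, hq, hr, hneg _ hp, hneg _ hq, hneg _ hr]
    obtain ⟨k1, k2, k3, k4⟩ := (hmem u v).1 (hsub hx)
    exact slanted_bounds ht k1 k2 k3 k4
  · intro hx
    have := slanted_mem_hexHull (p := (!₂[a - g, -h] : E2)) (q := (!₂[a + g, h] : E2))
      (s := s) (t := t) hx.1 hx.2
    convert this using 1
    · congr 1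
      ext i
      fin_cases i <;> simp <;> ring
    · ext i
      fin_cases i <;> simp <;> ring

lemma measurePreserving_coords :
    MeasurePreserving (fun x : E2 => (x 0, x 1)) volume (volume.prod volume) :=
  (volume_preserving_finTwoArrow ℝ).comp
    (EuclideanSpace.volume_preserving_symm_measurableEquiv_toLp (Fin 2))

lemma isClosed_boxHex (a h b : ℝ) : IsClosed (boxHex a h b) := by
  have h0 : Continuous fun x : E2 => x 0 := by fun_prop
  have h1 : Continuous fun x : E2 => x 1 := by fun_prop
  exact (isClosed_le h0.abs continuous_const).inter
    (isClosed_le ((h0.abs.const_mul _).add (h1.abs.const_mul _)) continuous_const)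

lemma volume_boxHex {a h b : ℝ} (ha : 0 < a) (hh : 0 < h) (hb : h ≤ b) :
    volume (boxHex a h b) = ENNReal.ofReal (2 * a * (h + b)) := by
  set S : Set (ℝ × ℝ) := {z | |z.1| ≤ a ∧ (b - h) * |z.1| + a * |z.2| ≤ a * b}
  have hS : MeasurableSet S := by
    apply IsClosed.measurableSet
    exact (isClosed_le continuous_fst.abs continuous_const).inter
      (isClosed_le ((continuous_fst.abs.const_mul _).add (continuous_snd.abs.const_mul _))
        continuous_const)
  have hpre : boxHex a h b = (fun x : E2 => (x 0, x 1)) ⁻¹' S := rfl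
  rw [hpre, measurePreserving_coords.measure_preimage hS.nullMeasurableSet, Measure.prod_apply hS]
  set φ : ℝ → ℝ := fun x => 2 * (b - (b - h) / a * |x|) with hφ
  have hpos : ∀ x ∈ Icc (-a) a, 0 ≤ φ x := by
    intro x hx
    have hx' := abs_le.2 hx
    have : (b - h) / a * |x| ≤ b - h := by
      rw [div_mul_eq_mul_div, div_le_iff₀ ha]
      nlinarith
    simp only [hφ]
    linarith
  have hfib : ∀ x, volume (Prod.mk x ⁻¹' S) =
      (Icc (-a) a).indicator (fun x => ENNReal.ofReal (φ x)) x := by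
    intro x
    by_cases hx : x ∈ Icc (-a) a
    · rw [indicator_of_mem hx]
      have : Prod.mk x ⁻¹' S = Icc (-(b - (b - h) / a * |x|)) (b - (b - h) / a * |x|) := by
        ext y
        have hx' := abs_le.2 hx
        simp only [S, mem_preimage, mem_ofPred_eq, hx', true_and]
        rw [mem_Icc, ← abs_le, le_sub_iff_add_le', div_mul_eq_mul_div, div_add' _ _ _ ha.ne',
          div_le_iff₀ ha, mul_comm |y| a, mul_comm b a]
      rw [this, Real.volume_Icc]
      congr 1
      simp only [hφ]
      ring
    · rw [indicator_of_notMem hx]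
      have : Prod.mk x ⁻¹' S = ∅ := by
        ext y
        simp only [S, mem_preimage, mem_ofPred_eq, mem_empty_iff_false, iff_false, not_and]
        intro h'
        exact absurd (abs_le.1 h') hx
      rw [this, measure_empty]
  simp only [hfib]
  have hcont : Continuous φ := by fun_prop
  rw [lintegral_indicator measurableSet_Icc, ← ofReal_integral_eq_lintegral_ofReal]
  · congr 1
    rw [integral_Icc_eq_integral_Ioc, ← intervalIntegral.integral_of_le (by linarith),
      ← intervalIntegral.integral_add_adjacent_intervals (b := 0)
        (hcont.intervalIntegrable _ _) (hcont.intervalIntegrable _ _)]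
    have e1 : ∫ x in (-a)..0, φ x = ∫ x in (-a)..0, 2 * (b + (b - h) / a * x) := by
      refine intervalIntegral.integral_congr fun x hx => ?_
      rw [uIcc_of_le (by linarith)] at hx
      simp only [hφ, abs_of_nonpos hx.2]
      ring
    have e2 : ∫ x in 0..a, φ x = ∫ x in 0..a, 2 * (b - (b - h) / a * x) := by
      refine intervalIntegral.integral_congr fun x hx => ?_
      rw [uIcc_of_le ha.le] at hx
      simp only [hφ, abs_of_nonneg hx.1]
    rw [e1, e2, intervalIntegral.integral_const_mul, intervalIntegral.integral_const_mul,
      intervalIntegral.integral_add (by simp) (Continuous.intervalIntegrable (by fun_prop) _ _),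
      intervalIntegral.integral_sub (by simp) (Continuous.intervalIntegrable (by fun_prop) _ _),
      intervalIntegral.integral_const_mul, intervalIntegral.integral_const_mul, integral_id,
      integral_id, intervalIntegral.integral_const, intervalIntegral.integral_const, smul_eq_mul,
      smul_eq_mul]
    field_simp
    ring
  · exact hcont.integrableOn_Icc
  · exact (ae_restrict_iff' measurableSet_Icc).2 (ae_of_all _ hpos)

lemma measurePreserving_shear {M : ℝ → ℝ} (hM : Measurable M) :
    MeasurePreserving (fun x : E2 => (!₂[x 0 - M (x 1), x 1] : E2)) := by
  have h1 : MeasurePreserving (fun z : ℝ × ℝ => (z.1, z.2 - M z.1)) (volume.prod volume)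
      (volume.prod volume) :=
    MeasurePreserving.skew_product (g := fun y x => x - M y) (MeasurePreserving.id volume)
      (by fun_prop) (ae_of_all _ fun y => (measurePreserving_sub_right volume (M y)).map_eq)
  have h2 : MeasurePreserving (fun z : ℝ × ℝ => (!₂[z.1, z.2] : E2)) (volume.prod volume) volume :=
    (EuclideanSpace.volume_preserving_symm_measurableEquiv_toLp (Fin 2)).symm.comp
      (volume_preserving_finTwoArrow ℝ).symm
  exact h2.comp (Measure.measurePreserving_swap.comp
    (h1.comp (Measure.measurePreserving_swap.comp measurePreserving_coords)))

lemma volume_hexHull_coords {a h g s t : ℝ} (ha : 0 < a) (hh : 0 < h) (hs : |s| ≤ 1) (ht : 1 ≤ t) :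
    volume (hexHull !₂[a - g, -h] !₂[a + g, h] !₂[s * a + t * g, t * h]) =
      ENNReal.ofReal (2 * a * h * (1 + t)) := by
  have h1 := (measurePreserving_shear (measurable_hexShift a h g s t)).measure_preimage
    (isClosed_boxHex a h (t * h)).measurableSet.nullMeasurableSet
  rw [volume_boxHex ha hh (by nlinarith)] at h1
  convert h1 using 2
  · ext x
    exact mem_hexHull_iff ha hh hs ht x
  · ring

lemma abs_capHeight_le {t v : ℝ} (hv : |v| ≤ t) : |capHeight t v| ≤ 1 := by
  rcases le_or_gt |v| 1 with h1 | h1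
  · simp [capHeight_of_abs_le h1]
  have ht0 : 0 < t - 1 := by linarith
  rcases le_or_gt 0 v with h0 | h0
  · rw [abs_of_nonneg h0] at *
    rw [capHeight_of_one_le h1.le, abs_le, div_le_iff₀ ht0, le_div_iff₀ ht0]
    constructor <;> linarith
  · rw [abs_of_neg h0] at *
    rw [capHeight_of_le_neg_one (by linarith), abs_le, div_le_iff₀ ht0, le_div_iff₀ ht0]
    constructor <;> linarith

lemma pCapacity_boxHex_le_coords {p a h g s t : ℝ} (hp : 1 ≤ p) (ha : 0 < a) (hh : 0 < h)
    (hs : |s| ≤ 1) (ht : 1 ≤ t) :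
    pCapacity p (boxHex a h (t * h)) ≤
      pCapacity p (hexHull !₂[a - g, -h] !₂[a + g, h] !₂[s * a + t * g, t * h]) := by
  have hb : h ≤ t * h := by nlinarith
  refine pCapacity_le_of_shear hp (boxHex_balanced hb) (hexHull_bounded _ _ _)
    (M := hexShift a h g s t) (C := |g| * t + 1 * a * 1) (fun x hx => ?_)
    fun x => (mem_hexHull_iff ha hh hs ht x).2
  have h1 := abs_snd_le_of_mem_boxHex ha hb hx
  have h2 : |x 1 / h| ≤ t := by rwa [abs_div, abs_of_pos hh, div_le_iff₀ hh]
  refine (abs_add_le _ _).trans ?_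
  rw [abs_mul, abs_mul, abs_mul, abs_of_pos ha]
  gcongr
  exact abs_capHeight_le h2

lemma image_hexHull (T : E2 ≃ₗᵢ[ℝ] E2) (p q r : E2) :
    T '' hexHull p q r = hexHull (T p) (T q) (T r) := by
  unfold hexHull
  rw [← LinearIsometryEquiv.coe_toLinearEquiv, ← LinearEquiv.coe_coe, LinearMap.image_convexHull]
  simp [image_insert_eq]

lemma pCapacity_image_isometry {p : ℝ} (T : E2 ≃ₗᵢ[ℝ] E2) {K : Set E2}
    (hK : Bornology.IsBounded K) : pCapacity p (T '' K) ≤ pCapacity p K := by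
  have := pCapacity_similarity_le (p := p) (K' := T '' K) hK 0 one_pos T.symm (by
    rintro _ ⟨y, hy, rfl⟩
    simpa using hy)
  simpa using this

lemma volume_image_isometry (T : E2 ≃ₗᵢ[ℝ] E2) (K : Set E2) : volume (T '' K) = volume K := by
  rw [LinearIsometryEquiv.image_eq_preimage_symm]
  exact T.symm.measurePreserving.measure_preimage_emb T.symm.toMeasurableEquiv.measurableEmbedding K

/-- Every nondegenerate pair of opposite sides can be made horizontal by an isometry. -/
lemma exists_isometry_coords {p q : E2} (hd : det2 p q ≠ 0) :
    ∃ (T : E2 ≃ₗᵢ[ℝ] E2) (g : ℝ), 0 < ‖p + q‖ ∧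
      T p = !₂[‖p + q‖ / 2 - g, -(|det2 p q| / ‖p + q‖)] ∧
      T q = !₂[‖p + q‖ / 2 + g, |det2 p q| / ‖p + q‖] := by
  have hn : 0 < ‖p + q‖ := by
    rw [norm_pos_iff]
    intro h
    have h0 := congrArg (fun x : E2 => x 0) h
    have h1 := congrArg (fun x : E2 => x 1) h
    simp only [PiLp.add_apply, PiLp.zero_apply] at h0 h1
    apply hd
    unfold det2
    linear_combination (p 0) * h1 - (p 1) * h0
  have hsq := norm_sq_eq (p + q)
  simp only [PiLp.add_apply] at hsq
  obtain ⟨ε, hε, hεd⟩ : ∃ ε : ℝ, ε ^ 2 = 1 ∧ |det2 p q| = ε * det2 p q := by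
    rcases le_total 0 (det2 p q) with h | h
    · exact ⟨1, by norm_num, by rw [abs_of_nonneg h, one_mul]⟩
    · exact ⟨-1, by norm_num, by rw [abs_of_nonpos h, neg_one_mul]⟩
  set n := ‖p + q‖
  have hcd : ((p 0 + q 0) / n) ^ 2 + ((p 1 + q 1) / n) ^ 2 = 1 := by
    field_simp
    linarith
  refine ⟨planeIsometry ((p 0 + q 0) / n) ((p 1 + q 1) / n) ε hcd hε,
    ((p 0 + q 0) / n * (q 0 - p 0) + (p 1 + q 1) / n * (q 1 - p 1)) / 2, hn, ?_, ?_⟩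
  all_goals
    rw [hεd]
    ext i
    fin_cases i
    · simp [planeIsometry_zero]
      field_simp
      linarith
    · simp [planeIsometry_one, det2]
      field_simp
      ring

/-- Symmetrizing a hexagon with respect to the normal to one of its sides. -/
lemma hexHull_symmetrize {e : ℝ} (he : 1 ≤ e) {p q : E2} (hd : det2 p q ≠ 0) {A B : ℝ}
    (hs : |B - A| ≤ 1) (ht : 1 ≤ A + B) :
    0 < ‖p + q‖ ∧
    pCapacity e (boxHex (‖p + q‖ / 2) (|det2 p q| / ‖p + q‖) ((A + B) * (|det2 p q| / ‖p + q‖))) ≤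
      pCapacity e (hexHull p q (B • q - A • p)) ∧
    volume (hexHull p q (B • q - A • p)) = ENNReal.ofReal (|det2 p q| * (1 + A + B)) := by
  obtain ⟨T, g, hn, hTp, hTq⟩ := exists_isometry_coords hd
  set n := ‖p + q‖
  set h := |det2 p q| / n
  have hh : 0 < h := div_pos (abs_pos.2 hd) hn
  have himg : T '' hexHull p q (B • q - A • p) = hexHull !₂[n / 2 - g, -h] !₂[n / 2 + g, h]
      !₂[(B - A) * (n / 2) + (A + B) * g, (A + B) * h] := by
    rw [image_hexHull, map_sub, map_smul, map_smul, hTp, hTq]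
    congr 1
    ext i
    fin_cases i <;> simp <;> ring
  refine ⟨hn, ?_, ?_⟩
  · refine le_trans ?_ (pCapacity_image_isometry T (hexHull_bounded _ _ _))
    rw [himg]
    exact pCapacity_boxHex_le_coords he (by positivity) hh hs ht
  · rw [← volume_image_isometry T, himg, volume_hexHull_coords (by positivity) hh hs ht]
    congr 1
    simp only [h]
    field_simp
    ring

lemma hexHull_eq_of_vertices {p q r p' q' r' : E2}
    (h : ({p, q, r, -p, -q, -r} : Set E2) = {p', q', r', -p', -q', -r'}) :
    hexHull p q r = hexHull p' q' r' := by
  unfold hexHull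
  rw [h]

lemma hexHull_neg_left (p q r : E2) : hexHull (-p) q r = hexHull p q r :=
  hexHull_eq_of_vertices (by ext; simp; tauto)

lemma hexHull_swap_left (p q r : E2) : hexHull q p r = hexHull p q r :=
  hexHull_eq_of_vertices (by ext; simp; tauto)

lemma hexHull_swap_right (p q r : E2) : hexHull p r q = hexHull p q r :=
  hexHull_eq_of_vertices (by ext; simp; tauto)

lemma neg_mem_hexHull {p q r x : E2} (hx : x ∈ hexHull p q r) : -x ∈ hexHull p q r := by
  have h1 : LinearIsometryEquiv.neg ℝ x ∈ LinearIsometryEquiv.neg ℝ '' hexHull p q r :=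
    mem_image_of_mem _ hx
  rw [image_hexHull] at h1
  rw [← hexHull_eq_of_vertices (p := -p) (q := -q) (r := -r) (by ext; simp; tauto)]
  simpa using h1

lemma hexHull_subset {p q r p' q' r' : E2} (hp : p ∈ hexHull p' q' r') (hq : q ∈ hexHull p' q' r')
    (hr : r ∈ hexHull p' q' r') : hexHull p q r ⊆ hexHull p' q' r' := by
  refine convexHull_min ?_ (convex_convexHull _ _)
  rintro y (rfl | rfl | rfl | rfl | rfl | rfl)
  exacts [hp, hq, hr, neg_mem_hexHull hp, neg_mem_hexHull hq, neg_mem_hexHull hr]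

lemma left_mem_hexHull (p q r : E2) : p ∈ hexHull p q r := subset_convexHull ℝ _ (by simp)

lemma middle_mem_hexHull (p q r : E2) : q ∈ hexHull p q r := subset_convexHull ℝ _ (by simp)

lemma hexHull_of_le_one {p q : E2} {A B : ℝ} (hA : 0 ≤ A) (hB : 0 ≤ B) (h : A + B ≤ 1) :
    hexHull p q (B • q - A • p) = hexHull p q ((1 : ℝ) • q - (0 : ℝ) • p) := by
  apply Subset.antisymm <;>
    refine hexHull_subset (left_mem_hexHull _ _ _) (middle_mem_hexHull _ _ _) ?_
  · have hq := middle_mem_hexHull p q ((1 : ℝ) • q - (0 : ℝ) • p)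
    have hp := neg_mem_hexHull (left_mem_hexHull p q ((1 : ℝ) • q - (0 : ℝ) • p))
    have hC : Convex ℝ (hexHull p q ((1 : ℝ) • q - (0 : ℝ) • p)) := convex_convexHull _ _
    have h0 := hC hq (neg_mem_hexHull hq) (a := 1 / 2) (b := 1 / 2) (by norm_num) (by norm_num)
      (by norm_num)
    convert hC.three_mem hq hp h0 hB hA (c := 1 - A - B) (by linarith) (by ring) using 1
    module
  · simpa using middle_mem_hexHull p q (B • q - A • p)

lemma volume_hexHull_of_functional {p q r : E2} {α β : ℝ} (h : α ≠ 0 ∨ β ≠ 0)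
    (hp : α * p 0 + β * p 1 = 0) (hq : α * q 0 + β * q 1 = 0) (hr : α * r 0 + β * r 1 = 0) :
    volume (hexHull p q r) = 0 := by
  set L : E2 →ₗ[ℝ] ℝ := α • (EuclideanSpace.proj 0 : E2 →L[ℝ] ℝ).toLinearMap +
    β • (EuclideanSpace.proj 1 : E2 →L[ℝ] ℝ).toLinearMap with hL
  have hLx : ∀ x : E2, L x = α * x 0 + β * x 1 := fun x => by simp [hL]
  have htop : LinearMap.ker L ≠ ⊤ := by
    intro htop
    have key : ∀ x : E2, α * x 0 + β * x 1 = 0 := fun x => by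
      rw [← hLx, ← LinearMap.mem_ker, htop]
      trivial
    have h1 := key !₂[1, 0]
    have h2 := key !₂[0, 1]
    simp at h1 h2
    tauto
  refine measure_mono_null ?_ (Measure.addHaar_submodule volume _ htop)
  refine convexHull_min ?_ (Submodule.convex _)
  rintro y (rfl | rfl | rfl | rfl | rfl | rfl) <;>
    simp only [SetLike.mem_coe, LinearMap.mem_ker, hLx, PiLp.neg_apply] <;> linarith

lemma volume_hexHull_of_det {p q r : E2} (hpq : det2 p q = 0) (hpr : det2 p r = 0)
    (hqr : det2 q r = 0) : volume (hexHull p q r) = 0 := by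
  unfold det2 at *
  by_cases hp : p 1 ≠ 0 ∨ p 0 ≠ 0
  · exact volume_hexHull_of_functional (α := -p 1) (β := p 0) (by simpa using hp) (by ring)
      (by linarith) (by linarith)
  by_cases hq : q 1 ≠ 0 ∨ q 0 ≠ 0
  · exact volume_hexHull_of_functional (α := -q 1) (β := q 0) (by simpa using hq) (by linarith)
      (by ring) (by linarith)
  push Not at hp hq
  by_cases hr : r 1 ≠ 0 ∨ r 0 ≠ 0
  · exact volume_hexHull_of_functional (α := -r 1) (β := r 0) (by simpa using hr)
      (by simp [hp]) (by simp [hq]) (by ring)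
  push Not at hr
  exact volume_hexHull_of_functional (α := 1) (β := 0) (by simp) (by simp [hp]) (by simp [hq])
    (by simp [hr])

/-- Unit-area centred hexagons `boxHex a h b` of capacity at most `m`. -/
structure UnitBoxHex (e m a h b : ℝ) : Prop where
  pos_a : 0 < a
  pos_h : 0 < h
  h_le : h ≤ b
  area : 2 * a * (h + b) = 1
  cap_le : pCapacity e (boxHex a h b) ≤ m

lemma unitBoxHex_of_combination {e : ℝ} (he : 1 ≤ e) {p q : E2} (hd : det2 p q ≠ 0)
    {A B : ℝ} (hs : |B - A| ≤ 1) (ht : 1 ≤ A + B)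
    (hv : volume (hexHull p q (B • q - A • p)) = 1) :
    UnitBoxHex e (pCapacity e (hexHull p q (B • q - A • p))) (‖p + q‖ / 2) (|det2 p q| / ‖p + q‖)
      ((A + B) * (|det2 p q| / ‖p + q‖)) := by
  obtain ⟨hn, hcap, hvol⟩ := hexHull_symmetrize he hd hs ht
  have hd' := abs_pos.2 hd
  have hh : 0 < |det2 p q| / ‖p + q‖ := by positivity
  rw [hv, eq_comm, ENNReal.ofReal_eq_one] at hvol
  refine ⟨by positivity, hh, by nlinarith, ?_, hcap⟩
  rw [← hvol]
  field_simp
  ring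

lemma exists_unitBoxHex_of_pos {e : ℝ} (he : 1 ≤ e) {p q : E2} (hd : det2 p q ≠ 0) {A B : ℝ}
    (hA : 0 ≤ A) (hA1 : A ≤ 1) (hB : 0 ≤ B) (hB1 : B ≤ 1)
    (hv : volume (hexHull p q (B • q - A • p)) = 1) :
    ∃ a h b, UnitBoxHex e (pCapacity e (hexHull p q (B • q - A • p))) a h b := by
  rcases le_total 1 (A + B) with h | h
  · exact ⟨_, _, _, unitBoxHex_of_combination he hd
      (abs_le.2 ⟨by linarith, by linarith⟩) h hv⟩
  · rw [hexHull_of_le_one hA hB h] at hv ⊢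
    exact ⟨_, _, _, unitBoxHex_of_combination he hd (by norm_num) (by norm_num) hv⟩

lemma exists_unitBoxHex_of_det_le {e : ℝ} (he : 1 ≤ e) {p q r : E2}
    (hpr : |det2 p r| ≤ |det2 p q|) (hqr : |det2 q r| ≤ |det2 p q|)
    (hv : volume (hexHull p q r) = 1) :
    ∃ a h b, UnitBoxHex e (pCapacity e (hexHull p q r)) a h b := by
  have hd : det2 p q ≠ 0 := by
    intro h0
    rw [h0, abs_zero, abs_nonpos_iff] at hpr hqr
    simp [volume_hexHull_of_det h0 hpr hqr] at hv
  have hd' := abs_pos.2 hd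
  set α := det2 q r / det2 p q with hα
  set β := det2 p r / det2 p q with hβ
  have hα1 : |α| ≤ 1 := by rwa [hα, abs_div, div_le_one hd']
  have hβ1 : |β| ≤ 1 := by rwa [hβ, abs_div, div_le_one hd']
  have hr : r = β • q - α • p := by
    ext i
    have hd2 := hd
    unfold det2 at hd2
    fin_cases i <;> simp [hα, hβ, det2] <;> field_simp <;> ring
  have key : ∀ p' q' : E2, det2 p' q' ≠ 0 → hexHull p' q' r = hexHull p q r →
      r = |β| • q' - |α| • p' → ∃ a h b, UnitBoxHex e (pCapacity e (hexHull p q r)) a h b := by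
    intro p' q' hd' hh hr'
    have := exists_unitBoxHex_of_pos he hd' (abs_nonneg α) hα1 (abs_nonneg β) hβ1
    rw [← hr', hh] at this
    exact this hv
  have hq' : ∀ p, hexHull p (-q) r = hexHull p q r := fun p => by
    rw [← hexHull_swap_left, hexHull_neg_left, hexHull_swap_left]
  have hdet1 : det2 (-p) q = -det2 p q := by simp [det2]; ring
  have hdet2 : det2 p (-q) = -det2 p q := by simp [det2]; ring
  have hdet3 : det2 (-p) (-q) = det2 p q := by simp [det2]
  rcases le_total 0 α with h1 | h1 <;> rcases le_total 0 β with h2 | h2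
  · exact key p q hd rfl (by rw [abs_of_nonneg h1, abs_of_nonneg h2, ← hr])
  · refine key p (-q) (by rwa [hdet2, neg_ne_zero]) (hq' p) ?_
    rw [abs_of_nonneg h1, abs_of_nonpos h2, neg_smul_neg, ← hr]
  · refine key (-p) q (by rwa [hdet1, neg_ne_zero]) (hexHull_neg_left _ _ _) ?_
    rw [abs_of_nonpos h1, abs_of_nonneg h2, neg_smul_neg, ← hr]
  · refine key (-p) (-q) (by rwa [hdet3]) (by rw [hq', hexHull_neg_left]) ?_
    rw [abs_of_nonpos h1, abs_of_nonpos h2, neg_smul_neg, neg_smul_neg, ← hr]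

lemma exists_unitBoxHex_of_hexHull {e : ℝ} (he : 1 ≤ e) {p q r : E2}
    (hv : volume (hexHull p q r) = 1) :
    ∃ a h b, UnitBoxHex e (pCapacity e (hexHull p q r)) a h b := by
  have hcomm : ∀ x y : E2, |det2 x y| = |det2 y x| := fun x y => by
    rw [← abs_neg]
    unfold det2
    congr 1
    ring
  rcases le_total |det2 p r| |det2 p q| with h1 | h1
  · rcases le_total |det2 q r| |det2 p q| with h2 | h2
    · exact exists_unitBoxHex_of_det_le he h1 h2 hv
    · have hh : hexHull q r p = hexHull p q r := by rw [hexHull_swap_right, hexHull_swap_left]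
      rw [← hh] at hv ⊢
      exact exists_unitBoxHex_of_det_le he (by rwa [hcomm q p]) (by rw [hcomm r p]; linarith) hv
  · rcases le_total |det2 q r| |det2 p r| with h2 | h2
    · rw [← hexHull_swap_right] at hv ⊢
      exact exists_unitBoxHex_of_det_le he h1 (by rwa [hcomm r q]) hv
    · have hh : hexHull q r p = hexHull p q r := by rw [hexHull_swap_right, hexHull_swap_left]
      rw [← hh] at hv ⊢
      exact exists_unitBoxHex_of_det_le he (by rw [hcomm q p]; linarith) (by rwa [hcomm r p]) hv

lemma exists_unitBoxHex {e : ℝ} (he : 1 ≤ e) {H : Set E2} (hH : Hex H) (hv : volume H = 1) :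
    ∃ a h b, UnitBoxHex e (pCapacity e H) a h b := by
  obtain ⟨⟨x₀, p, q, r, rfl⟩, -⟩ := hH
  have hv' : volume (hexHull p q r) = 1 := by
    rw [← hv]
    exact (measure_preimage_add volume (-x₀) _).symm.trans (by rw [image_add_left]; rfl)
  obtain ⟨a, h, b, hr⟩ := exists_unitBoxHex_of_hexHull he hv'
  refine ⟨a, h, b, hr.1, hr.2, hr.3, hr.4, hr.5.trans ?_⟩
  have hK : Bornology.IsBounded ((fun y => x₀ + y) '' hexHull p q r) := by
    rw [← Set.singleton_add]
    exact Bornology.isBounded_singleton.add (hexHull_bounded p q r)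
  have := pCapacity_similarity_le (p := e) (K' := hexHull p q r) hK x₀ one_pos
    (LinearIsometryEquiv.refl ℝ E2) (fun y hy => ⟨y, hy, by simp⟩)
  rw [Real.one_rpow, one_mul] at this
  exact this

lemma convex_boxHex {a h b : ℝ} (ha : 0 < a) (hb : h ≤ b) : Convex ℝ (boxHex a h b) := by
  rintro x ⟨x0, x1⟩ y ⟨y0, y1⟩ α β hα hβ hαβ
  have key : ∀ i, |(α • x + β • y) i| ≤ α * |x i| + β * |y i| := fun i => by
    rw [PiLp.add_apply, PiLp.smul_apply, PiLp.smul_apply, smul_eq_mul, smul_eq_mul,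
      ← abs_of_nonneg hα, ← abs_of_nonneg hβ, ← abs_mul, ← abs_mul, abs_of_nonneg hα,
      abs_of_nonneg hβ]
    exact abs_add_le _ _
  have hb' : 0 ≤ b - h := by linarith
  constructor
  · calc _ ≤ α * |x 0| + β * |y 0| := key 0
      _ ≤ α * a + β * a := by gcongr
      _ = a := by rw [← add_mul, hαβ, one_mul]
  · calc _ ≤ (b - h) * (α * |x 0| + β * |y 0|) + a * (α * |x 1| + β * |y 1|) := by
          gcongr <;> exact key _
      _ = α * ((b - h) * |x 0| + a * |x 1|) + β * ((b - h) * |y 0| + a * |y 1|) := by ring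
      _ ≤ α * (a * b) + β * (a * b) := by gcongr
      _ = a * b := by rw [← add_mul, hαβ, one_mul]

lemma neg_mem_boxHex {a h b : ℝ} {x : E2} (hx : x ∈ boxHex a h b) : -x ∈ boxHex a h b := by
  simpa [boxHex] using hx

/-- Symmetrizing `boxHex a h b` with respect to the normal to a slanted side. -/
lemma UnitBoxHex.next {e m a h b : ℝ} (he : 1 ≤ e) (H : UnitBoxHex e m a h b) :
    ∃ a' h' b', UnitBoxHex e m a' h' b' ∧ a' ^ 2 = (a ^ 2 + 1 / (4 * a ^ 2)) / 4 ∧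
      a' * b' = (1 - a * b) / 2 := by
  obtain ⟨ha, hh, hb, harea, hcap⟩ := H
  have hb0 : 0 < b := by linarith
  set P : E2 := !₂[-a, h]
  set Q : E2 := !₂[0, b]
  have hdet : det2 P Q = -(a * b) := by simp [det2, P, Q]
  have hdabs : |det2 P Q| = a * b := by rw [hdet, abs_neg, abs_of_pos (by positivity)]
  have hdne : det2 P Q ≠ 0 := by rw [hdet]; simp [ha.ne', hb0.ne']
  have hB0 : 0 < 2 * h / b := by positivity
  have hB : 2 * h / b ≤ 2 := by rw [div_le_iff₀ hb0]; linarith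
  set B := 2 * h / b with hBdef
  have hBb : B * b = 2 * h := by rw [hBdef]; field_simp
  have hs : |B - 1| ≤ 1 := abs_le.2 ⟨by linarith, by linarith⟩
  obtain ⟨hn, hcap', -⟩ := hexHull_symmetrize he hdne hs (by linarith)
  rw [hdabs] at hcap'
  have hsub : hexHull P Q (B • Q - (1 : ℝ) • P) ⊆ boxHex a h b := by
    have hP : P ∈ boxHex a h b := by
      simp only [boxHex, mem_ofPred_eq, P, Matrix.cons_val_zero, Matrix.cons_val_one, abs_neg,
        abs_of_pos ha, abs_of_pos hh]
      exact ⟨le_rfl, by linarith⟩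
    have hQ : Q ∈ boxHex a h b := by
      simp [boxHex, Q, abs_of_pos hb0, ha.le]
    have hR : B • Q - (1 : ℝ) • P ∈ boxHex a h b := by
      have : B • Q - (1 : ℝ) • P = !₂[a, h] := by
        ext i
        fin_cases i <;> simp [P, Q]
        linarith
      rw [this]
      simp only [boxHex, mem_ofPred_eq, Matrix.cons_val_zero, Matrix.cons_val_one,
        abs_of_pos ha, abs_of_pos hh]
      exact ⟨le_rfl, by linarith⟩
    refine convexHull_min ?_ (convex_boxHex ha hb)
    rintro y (rfl | rfl | rfl | rfl | rfl | rfl)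
    exacts [hP, hQ, hR, neg_mem_boxHex hP, neg_mem_boxHex hQ, neg_mem_boxHex hR]
  have hnsq : ‖P + Q‖ ^ 2 = a ^ 2 + (h + b) ^ 2 := by
    rw [norm_sq_eq]
    simp [P, Q]
  set n := ‖P + Q‖
  have hhb : h + b = 1 / (2 * a) := by field_simp; linarith
  refine ⟨n / 2, a * b / n, (1 + B) * (a * b / n), ⟨by positivity, by positivity, ?_, ?_, ?_⟩,
    ?_, ?_⟩
  · have : 0 < a * b / n := by positivity
    nlinarith
  · field_simp
    linear_combination harea + a * hBb
  · exact hcap'.trans ((pCapacity_mono (boxHex_bounded ha hb) hsub).trans hcap)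
  · rw [div_pow, hnsq, hhb]
    field_simp
    ring
  · field_simp
    linear_combination a * hBb + harea

lemma boxHex_mono {a h b a' h' b' : ℝ} (ha : 0 < a) (haa : a ≤ a') (hhh : h ≤ h') (hbb : b ≤ b')
    (hb : h' ≤ b') : boxHex a h b ⊆ boxHex a' h' b' := by
  rintro x ⟨h0, h1⟩
  refine ⟨h0.trans haa, ?_⟩
  have h2 : |x 1| ≤ b - (b - h) * (|x 0| / a) := by
    rw [← mul_div_assoc, le_sub_iff_add_le', div_add' _ _ _ ha.ne', div_le_iff₀ ha]
    linarith
  have hu : |x 0| / a ≤ 1 := by rwa [div_le_one ha]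
  have hu0 : 0 ≤ |x 0| / a := by positivity
  have huu : |x 0| / a' ≤ |x 0| / a := by gcongr
  have h3 : |x 1| ≤ b' - (b' - h') * (|x 0| / a') := by nlinarith
  have h4 := mul_le_mul_of_nonneg_left h3 (ha.le.trans haa)
  have h5 : a' * (|x 0| / a') = |x 0| := mul_div_cancel₀ _ (by linarith)
  linear_combination h4 - (b' - h') * h5

lemma smul_mem_boxHex {a h b k : ℝ} (hk : 0 ≤ k) {x : E2} (hx : x ∈ boxHex a h b) :
    k • x ∈ boxHex (k * a) (k * h) (k * b) := by
  obtain ⟨h0, h1⟩ := hx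
  simp only [boxHex, mem_ofPred_eq, PiLp.smul_apply, smul_eq_mul, abs_mul, abs_of_nonneg hk]
  refine ⟨by gcongr, ?_⟩
  calc _ = k * k * ((b - h) * |x 0| + a * |x 1|) := by ring
    _ ≤ k * k * (a * b) := by gcongr
    _ = _ := by ring

lemma one_le_add_inv_four_mul {x : ℝ} (hx : 0 < x) : 1 ≤ x + 1 / (4 * x) := by
  have h : x + 1 / (4 * x) - 1 = (2 * x - 1) ^ 2 / (4 * x) := by
    field_simp
    ring
  have h2 : 0 ≤ (2 * x - 1) ^ 2 / (4 * x) := by positivity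
  linarith

lemma abs_area_map_sub_le {x α : ℝ} (hx : 1 / 4 ≤ x) (hα : 1 / 4 ≤ α) (hα' : 12 * α ^ 2 = 1) :
    |(x + 1 / (4 * x)) / 4 - α| ≤ |x - α| * (3 / 4) := by
  have hfac : (x + 1 / (4 * x)) / 4 - α = (x - α) * ((1 - 1 / (4 * x * α)) / 4) := by
    field_simp
    linear_combination -x * hα'
  have hub : 1 / (4 * x * α) ≤ 4 := by
    rw [div_le_iff₀ (by positivity)]
    nlinarith
  have hlb : 0 < 1 / (4 * x * α) := by positivity
  have hfac2 : |(1 - 1 / (4 * x * α)) / 4| ≤ 3 / 4 := abs_le.2 ⟨by linarith, by linarith⟩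
  rw [hfac, abs_mul]
  gcongr

lemma UnitBoxHex.iterate {e m a h b α : ℝ} (he : 1 ≤ e) (H : UnitBoxHex e m a h b)
    (ha : 1 / 4 ≤ a ^ 2) (hα : 1 / 4 ≤ α) (hα' : 12 * α ^ 2 = 1) (n : ℕ) :
    ∃ a' h' b', UnitBoxHex e m a' h' b' ∧ 1 / 4 ≤ a' ^ 2 ∧
      |a' ^ 2 - α| ≤ (3 / 4) ^ n * |a ^ 2 - α| ∧
      |a' * b' - 1 / 3| ≤ (3 / 4) ^ n * |a * b - 1 / 3| := by
  induction n with
  | zero => exact ⟨a, h, b, H, ha, by simp, by simp⟩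
  | succ n ih =>
    obtain ⟨a', h', b', H', ha', h1, h2⟩ := ih
    obtain ⟨a₂, h₂, b₂, H₂, hA, hB⟩ := H'.next he
    refine ⟨a₂, h₂, b₂, H₂, ?_, ?_, ?_⟩
    · rw [hA]
      linarith [one_le_add_inv_four_mul (show 0 < a' ^ 2 by linarith)]
    · rw [hA, pow_succ (3 / 4 : ℝ)]
      linarith [abs_area_map_sub_le ha' hα hα']
    · have hfac : a₂ * b₂ - 1 / 3 = (a' * b' - 1 / 3) * (-1 / 2) := by
        rw [hB]
        ring
      rw [hfac, abs_mul, pow_succ]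
      calc _ ≤ (3 / 4) ^ n * |a * b - 1 / 3| * (3 / 4) := by
            gcongr
            rw [abs_le]
            norm_num
        _ = _ := by ring

/-- Iterated symmetrization brings the hexagon arbitrarily close to the regular one. -/
lemma UnitBoxHex.exists_near {e m a h b β c : ℝ} (he : 1 ≤ e) (H : UnitBoxHex e m a h b)
    (hβ : 0 < β) (hβ' : 12 * β ^ 4 = 1) (hc : 1 < c) :
    ∃ a' h' b', UnitBoxHex e m a' h' b' ∧ c⁻¹ * β ≤ a' ∧ c⁻¹ * (1 / (6 * β)) ≤ h' ∧
      c⁻¹ * (1 / (3 * β)) ≤ b' := by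
  have hc0 : 0 < c := by linarith
  obtain ⟨a₁, h₁, b₁, H₁, hA, -⟩ := H.next he
  have hα : 1 / 4 ≤ β ^ 2 := by nlinarith [sq_nonneg (β ^ 2)]
  have ha₁ : 1 / 4 ≤ a₁ ^ 2 := by
    rw [hA]
    linarith [one_le_add_inv_four_mul (pow_pos H.pos_a 2)]
  choose A Hh B hred hlow hAA hBB using
    H₁.iterate he ha₁ hα (by linear_combination hβ')
  have hpow : ∀ C : ℝ, Tendsto (fun n : ℕ => (3 / 4 : ℝ) ^ n * C) atTop (𝓝 0) := fun C => by
    simpa using (tendsto_pow_atTop_nhds_zero_of_lt_one (by norm_num : (0 : ℝ) ≤ 3 / 4)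
      (by norm_num)).mul_const C
  have tA2 : Tendsto (fun n => A n ^ 2) atTop (𝓝 (β ^ 2)) :=
    tendsto_iff_norm_sub_tendsto_zero.2
      (squeeze_zero (fun _ => norm_nonneg _) hAA (hpow _))
  have tAB : Tendsto (fun n => A n * B n) atTop (𝓝 (1 / 3)) :=
    tendsto_iff_norm_sub_tendsto_zero.2
      (squeeze_zero (fun _ => norm_nonneg _) hBB (hpow _))
  have tA : Tendsto A atTop (𝓝 β) := by
    have := tA2.sqrt
    rw [Real.sqrt_sq hβ.le] at this
    exact this.congr fun n => Real.sqrt_sq (hred n).pos_a.le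
  have tB : Tendsto B atTop (𝓝 (1 / (3 * β))) := by
    have := tAB.div tA hβ.ne'
    rw [div_div] at this
    exact this.congr fun n => mul_div_cancel_left₀ _ (hred n).pos_a.ne'
  have tH : Tendsto Hh atTop (𝓝 (1 / (6 * β))) := by
    have := (tendsto_const_nhds (x := (1 / 2 : ℝ))).div tA hβ.ne' |>.sub tB
    rw [show 1 / 2 / β - 1 / (3 * β) = 1 / (6 * β) by field_simp; norm_num] at this
    refine this.congr fun n => ?_
    have h1 := (hred n).pos_a
    have h2 := (hred n).area
    simp only [Pi.div_apply]
    field_simp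
    linarith
  have key : ∀ x : ℝ, 0 < x → c⁻¹ * x < x := fun x hx =>
    mul_lt_of_lt_one_left hx (inv_lt_one_of_one_lt₀ hc)
  obtain ⟨n, h1, h2, h3⟩ := ((tA.eventually (lt_mem_nhds (key β hβ))).and
    ((tH.eventually (lt_mem_nhds (key _ (by positivity)))).and
      (tB.eventually (lt_mem_nhds (key _ (by positivity)))))).exists
  exact ⟨_, _, _, hred n, h1.le, h2.le, h3.le⟩

lemma hexVertex_eq (k : ℕ) : hexVertex k = !₂[Real.cos (k * π / 3), Real.sin (k * π / 3)] := rfl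

lemma hexVertex_add_three (k : ℕ) : hexVertex (k + 3) = -hexVertex k := by
  have : ((k + 3 : ℕ) : ℝ) * π / 3 = k * π / 3 + π := by
    push_cast
    ring
  rw [hexVertex_eq, hexVertex_eq, this, Real.cos_add_pi, Real.sin_add_pi]
  ext i
  fin_cases i <;> simp

lemma hexVertex_zero : hexVertex 0 = !₂[1, 0] := by simp [hexVertex_eq]

lemma hexVertex_one : hexVertex 1 = !₂[1 / 2, √3 / 2] := by simp [hexVertex_eq]

lemma hexVertex_two : hexVertex 2 = !₂[-(1 / 2), √3 / 2] := by
  rw [hexVertex_eq, show ((2 : ℕ) : ℝ) * π / 3 = π - π / 3 by push_cast; ring, Real.cos_pi_sub,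
    Real.sin_pi_sub, Real.cos_pi_div_three, Real.sin_pi_div_three]

lemma stdHexagon_eq : stdHexagon = hexHull !₂[-1, 0] !₂[-(1 / 2), √3 / 2]
    ((1 : ℝ) • !₂[-(1 / 2), √3 / 2] - (1 : ℝ) • !₂[-1, 0]) := by
  have h0 : (!₂[-1, 0] : E2) = -hexVertex 0 := by
    rw [hexVertex_zero]
    ext i
    fin_cases i <;> simp
  have h1 : (1 : ℝ) • !₂[-(1 / 2), √3 / 2] - (1 : ℝ) • (!₂[-1, 0] : E2) = hexVertex 1 := by
    rw [hexVertex_one]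
    ext i
    fin_cases i <;> simp
    norm_num
  rw [h1, h0, ← hexVertex_two, hexHull_neg_left, stdHexagon, hexHull]
  congr 1
  have h3 := hexVertex_add_three 0
  have h4 := hexVertex_add_three 1
  have h5 := hexVertex_add_three 2
  ext x
  simp only [mem_range, Fin.exists_fin_succ, mem_insert_iff, mem_singleton_iff]
  norm_num [← h3, ← h4, ← h5]
  simp only [eq_comm (b := x)]
  tauto

lemma volume_stdHexagon : volume stdHexagon = ENNReal.ofReal (3 * √3 / 2) := by
  have hd : det2 !₂[-1, 0] !₂[-(1 / 2), √3 / 2] = -(√3 / 2) := by simp [det2]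
  have h3 : 0 < √3 / 2 := by positivity
  obtain ⟨-, -, h⟩ := hexHull_symmetrize le_rfl (by rw [hd]; simp)
    (p := (!₂[-1, 0] : E2)) (q := !₂[-(1 / 2), √3 / 2]) (A := 1) (B := 1) (by simp) (by norm_num)
  rw [stdHexagon_eq, h, hd, abs_neg, abs_of_pos h3]
  congr 1
  ring

lemma exists_isometry_stdHexagon :
    ∃ T : E2 ≃ₗᵢ[ℝ] E2, ∀ x ∈ stdHexagon, T x ∈ boxHex (√3 / 2) (1 / 2) 1 := by
  refine ⟨planeIsometry 0 1 (-1) (by norm_num) (by norm_num), fun x hx => ?_⟩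
  set T := planeIsometry 0 1 (-1) (by norm_num) (by norm_num)
  have hC : Convex ℝ (boxHex (√3 / 2) (1 / 2) 1) := convex_boxHex (by positivity) (by norm_num)
  have hTv : ∀ v : E2, T v = !₂[v 1, v 0] := fun v => by
    ext i
    fin_cases i
    · simp [T, planeIsometry_zero]
    · simp [T, planeIsometry_one]
  have hx' := mem_image_of_mem T hx
  rw [stdHexagon_eq, image_hexHull] at hx'
  have h3 : |√3 / 2| = √3 / 2 := abs_of_nonneg (by positivity)
  have hp : T !₂[-1, 0] ∈ boxHex (√3 / 2) (1 / 2) 1 := by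
    rw [hTv]
    simp only [boxHex, mem_ofPred_eq, Matrix.cons_val_zero, Matrix.cons_val_one, abs_zero, abs_neg,
      abs_one]
    exact ⟨by positivity, by linarith⟩
  have hq : T !₂[-(1 / 2), √3 / 2] ∈ boxHex (√3 / 2) (1 / 2) 1 := by
    rw [hTv]
    simp only [boxHex, mem_ofPred_eq, Matrix.cons_val_zero, Matrix.cons_val_one, h3]
    norm_num
    linarith
  have hr : T ((1 : ℝ) • !₂[-(1 / 2), √3 / 2] - (1 : ℝ) • !₂[-1, 0]) ∈
      boxHex (√3 / 2) (1 / 2) 1 := by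
    rw [show (1 : ℝ) • !₂[-(1 / 2), √3 / 2] - (1 : ℝ) • (!₂[-1, 0] : E2) = !₂[1 / 2, √3 / 2] by
      ext i; fin_cases i <;> simp; norm_num, hTv]
    simp only [boxHex, mem_ofPred_eq, Matrix.cons_val_zero, Matrix.cons_val_one, h3]
    norm_num
    linarith
  refine convexHull_min ?_ hC hx'
  rintro y (rfl | rfl | rfl | rfl | rfl | rfl)
  exacts [hp, hq, hr, neg_mem_boxHex hp, neg_mem_boxHex hq, neg_mem_boxHex hr]

lemma exists_similarity_form {f : E2 → E2} {s : ℝ} (hs : 0 < s)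
    (hf : ∀ x y, dist (f x) (f y) = s * dist x y) :
    ∃ T : E2 ≃ₗᵢ[ℝ] E2, ∀ x, f x = f 0 + s • T x := by
  have hi : Isometry fun x => s⁻¹ • f x := Isometry.of_dist_eq fun x y => by
    rw [dist_smul₀, hf, norm_inv, Real.norm_of_nonneg hs.le, inv_mul_cancel_left₀ hs.ne']
  set F := hi.affineIsometryOfStrictConvexSpace
  refine ⟨F.linearIsometry.toLinearIsometryEquiv rfl, fun x => ?_⟩
  have h1 := F.map_vadd 0 x
  have hF : ∀ x, F x = s⁻¹ • f x := fun x => by simp [F]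
  simp only [vadd_eq_add, add_zero, hF] at h1
  simp only [LinearIsometry.coe_toLinearIsometryEquiv]
  have h2 := congrArg (s • ·) h1
  simp only [smul_add, smul_inv_smul₀ hs.ne'] at h2
  rw [h2, add_comm]

open Pointwise in
lemma area_of_similarity {s : ℝ} (hs : 0 < s) (T : E2 ≃ₗᵢ[ℝ] E2) (c : E2)
    (hv : volume ((fun x => c + s • T x) '' stdHexagon) = 1) : s ^ 2 * (3 * √3 / 2) = 1 := by
  have himg : (fun x => c + s • T x) '' stdHexagon =
      (fun x => -c + x) ⁻¹' (s • (T '' stdHexagon)) := by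
    rw [← image_add_left, ← image_smul, image_image, image_image]
  rw [himg, measure_preimage_add, Measure.addHaar_smul, volume_image_isometry, volume_stdHexagon,
    ← ENNReal.ofReal_mul (abs_nonneg _), ENNReal.ofReal_eq_one, finrank_euclideanSpace_fin,
    abs_of_nonneg (by positivity)] at hv
  exact hv

/-- For `p ∈ (1,2)`, among convex polygons of unit area tiling the plane
by translations, the regular hexagon minimizes the variational `p`-capacity. -/
theorem statement14 (p : ℝ) (hp : p ∈ Set.Ioo (1 : ℝ) 2)
    (Hstar : Set E2) (hreg : IsRegularHexagon Hstar) (hvolstar : volume Hstar = 1) :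
    ∀ H : Set E2, Hex H → volume H = 1 → pCapacity p Hstar ≤ pCapacity p H := by
  intro H hH hv
  obtain ⟨f, ⟨s, hs, hf⟩, rfl⟩ := hreg
  obtain ⟨T, hT⟩ := exists_similarity_form hs hf
  have hfe : f = fun x => f 0 + s • T x := funext hT
  rw [hfe] at hvolstar ⊢
  set c₀ := f 0
  have harea := area_of_similarity hs T c₀ hvolstar
  obtain ⟨a, h, b, hred⟩ := exists_unitBoxHex hp.1.le hH hv
  obtain ⟨S, hS⟩ := exists_isometry_stdHexagon
  have h3 : (√3) ^ 2 = 3 := Real.sq_sqrt (by norm_num)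
  have h3pos : 0 < √3 := by positivity
  refine le_of_forall_rpow_mul (p := 2 - p) fun c hc => ?_
  have hc0 : 0 < c := by linarith
  obtain ⟨a', h', b', hred', k1, k2, k3⟩ := hred.exists_near hp.1.le (β := s * (√3 / 2))
    (by positivity) (by
      linear_combination (s ^ 2 * (3 * √3 / 2) + 1) * harea +
        s ^ 4 * (3 / 4 * (√3) ^ 2) * h3) hc
  rw [show 1 / (6 * (s * (√3 / 2))) = s * (1 / 2) by field_simp; linarith] at k2
  rw [show 1 / (3 * (s * (√3 / 2))) = s * 1 by field_simp; linarith] at k3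
  have := pCapacity_similarity_le (p := p) (K' := (fun x => c₀ + s • T x) '' stdHexagon)
    (boxHex_bounded hred'.pos_a hred'.h_le) (-(c⁻¹ • S (T.symm c₀))) (inv_pos.2 hc0)
    (T.symm.trans S) (by
      rintro _ ⟨x, hx, rfl⟩
      have hm := smul_mem_boxHex (inv_pos.2 hc0).le (smul_mem_boxHex hs.le (hS x hx))
      convert boxHex_mono (by positivity) k1 k2 k3 hred'.h_le hm using 1
      simp)
  calc _ ≤ _ := this
    _ = c ^ (2 - p) * pCapacity p (boxHex a' h' b') := by
      rw [Real.inv_rpow hc0.le, ← Real.rpow_neg hc0.le, neg_sub]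
    _ ≤ _ := by
      gcongr
      exact hred'.cap_le
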